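/- arXiv:2305.07757 — 3 statements merged into one kernel-verified Lean document; each statement's English description precedes it below -/
import Mathlib

section
/- Let Q(z,z̄) = Σ_{α,β} c_{αβ} z^α z̄^β be a real-valued polynomial function on ℂⁿ (so c_{αβ} = conj(c_{βα})), homogeneous of total degree d ≥ 2 in (z,z̄), with no pluriharmonic terms (c_{αβ} = 0 whenever α = 0 or β = 0). Let λ₁,…,λₙ ∈ ℂ and J₁ ⊆ {1,…,n−1} satisfy λ_{j+1} = λ_j for every j ∈ J₁ (Jordan normal form condition), and define the linear holomorphic vector fields X = Σ_j λ_j z_j ∂/∂z_j and Z = Σ_{j∈J₁} z_j ∂/∂z_{j+1}, acting on Q through the holomorphic partial derivatives only, i.e. X(Q)(z) = Σ_j λ_j z_j (∂Q/∂z_j)(z,z̄) and Z(Q)(z) = Σ_{j∈J₁} z_j (∂Q/∂z_{j+1})(z,z̄). Set W = X + Z. Then W(Q) = Q holds identically on ℂⁿ if and only if X(Q) = Q and Z(Q) = 0 hold identically on ℂⁿ. -/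
open Complex

noncomputable section

/-- `QEval c z = Σ_{α,β} c_{αβ} z^α z̄^β`, the real-valued polynomial with
coefficient family `c`. -/
def QEval {n : ℕ} (c : ((Fin n →₀ ℕ) × (Fin n →₀ ℕ)) →₀ ℂ) (z : Fin n → ℂ) : ℂ :=
  c.sum fun p a => a * (∏ j, z j ^ p.1 j) * ∏ j, (starRingEnd ℂ) (z j) ^ p.2 j

/-- The holomorphic partial derivative `∂Q/∂z_k` of `QEval c`. -/
def QDeriv {n : ℕ} (c : ((Fin n →₀ ℕ) × (Fin n →₀ ℕ)) →₀ ℂ) (k : Fin n) (z : Fin n → ℂ) : ℂ :=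
  c.sum fun p a =>
    a * (p.1 k : ℂ) * (∏ j, z j ^ (((p.1 - Finsupp.single k 1) : Fin n →₀ ℕ) j)) *
      ∏ j, (starRingEnd ℂ) (z j) ^ p.2 j

/-!
Treating `z̄` as independent variables `w`, an identity between polynomials in `(z, z̄)` is an
identity between polynomials in `(z, w)`, and `X` and `Z` become derivations of `ℂ[z, w]`. There
`X` multiplies each monomial by a scalar, so its generalized eigenspaces are eigenspaces; `Z` is
locally nilpotent, because it is nilpotent on the variables; and `X` and `Z` commute, because they
do on the variables, which is the Jordan condition. If `(X + Z) Q = μ Q`, then `Q` is a generalized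
`μ`-eigenvector of `X = (X + Z) - Z`, hence an eigenvector, and `Z Q = 0` follows.
-/

open MvPolynomial

section Derivation

variable {R A : Type*} [CommSemiring R] [CommSemiring A] [Algebra R A]

lemma iterate_derivation_mul_eq_zero (D : Derivation R A A) {a b : A} {k l : ℕ}
    (ha : D^[k] a = 0) (hb : D^[l] b = 0) : D^[k + l] (a * b) = 0 := by
  induction k generalizing a b l with
  | zero => rw [show a = 0 from ha, zero_mul, iterate_map_zero]
  | succ k ihk =>
    induction l generalizing b with
    | zero => rw [show b = 0 from hb, mul_zero, iterate_map_zero]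
    | succ l ihl =>
      have h_left : D^[k + 1 + l] (a * D b) = 0 := ihl hb
      have h_right : D^[k + 1 + l] (b * D a) = 0 := by
        rw [mul_comm, add_right_comm, add_assoc]
        exact ihk ha hb
      rw [← add_assoc, Function.iterate_succ_apply, D.leibniz, smul_eq_mul, smul_eq_mul,
        iterate_map_add, h_left, h_right, add_zero]

lemma exists_iterate_derivation_eq_zero {σ : Type*}
    (D : Derivation R (MvPolynomial σ R) (MvPolynomial σ R))
    (hD : ∀ i, ∃ k, D^[k] (X i) = 0) (p : MvPolynomial σ R) : ∃ k, D^[k] p = 0 := by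
  induction p using MvPolynomial.induction_on with
  | C a => exact ⟨1, derivation_C D a⟩
  | add p q hp hq =>
    obtain ⟨⟨k, hk⟩, l, hl⟩ := hp, hq
    refine ⟨k + l, ?_⟩
    rw [iterate_map_add, Function.iterate_add_apply _ k l q, hl, add_comm k,
      Function.iterate_add_apply, hk, iterate_map_zero, iterate_map_zero, add_zero]
  | mul_X p i hp =>
    obtain ⟨⟨k, hk⟩, l, hl⟩ := hp, hD i
    exact ⟨k + l, iterate_derivation_mul_eq_zero D hk hl⟩

end Derivation

lemma coeff_X_mul_pderiv {σ R : Type*} [CommSemiring R] (i : σ) (m : σ →₀ ℕ)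
    (p : MvPolynomial σ R) : coeff m (X i * pderiv i p) = m i * coeff m p := by
  classical
  induction p using MvPolynomial.induction_on' with
  | monomial s a =>
    rw [X_mul_pderiv_monomial, coeff_smul, nsmul_eq_mul, coeff_monomial]
    split_ifs with h
    · rw [h]
    · rw [mul_zero, mul_zero]
  | add p q hp hq => rw [map_add, mul_add, coeff_add, hp, hq, coeff_add, mul_add]

lemma eigenspace_add_eq_inf_ker {R M : Type*} [CommRing R] [AddCommGroup M] [Module R M]
    {S N : Module.End R M} {μ : R} (hcomm : Commute S N)
    (hS : S.maxGenEigenspace μ = S.eigenspace μ) (hN : N.maxGenEigenspace 0 = ⊤) :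
    (S + N).eigenspace μ = S.eigenspace μ ⊓ LinearMap.ker N := by
  ext v
  rw [Submodule.mem_inf, LinearMap.mem_ker]
  simp only [Module.End.mem_eigenspace_iff, LinearMap.add_apply]
  refine ⟨fun hv => ?_, fun ⟨hSv, hNv⟩ => by rw [hSv, hNv, add_zero]⟩
  have hSv : v ∈ S.maxGenEigenspace μ := by
    have h_neg : v ∈ (-N).maxGenEigenspace 0 := by
      have := Module.End.genEigenspace_le_smul N 0 (-1) ⊤ (hN.ge (Submodule.mem_top (x := v)))
      rwa [neg_one_smul, mul_zero] at this
    have h_sum : v ∈ (S + N).maxGenEigenspace μ :=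
      ((S + N).genEigenspace μ).mono le_top (Module.End.mem_eigenspace_iff.mpr hv)
    have := Module.End.genEigenspace_inf_le_add (S + N) (-N) μ 0 ⊤ ⊤
      (hcomm.neg_right.add_left (Commute.refl N).neg_right) ⟨h_sum, h_neg⟩
    rwa [add_neg_cancel_right, add_zero, top_add] at this
  rw [hS, Module.End.mem_eigenspace_iff] at hSv
  exact ⟨hSv, by rwa [hSv, add_eq_left] at hv⟩

lemma isNilpotent_of_strictlyUpperTriangular {m R : Type*} [Fintype m] [LinearOrder m] [CommRing R]
    {M : Matrix m m R} (hM : ∀ i j, j ≤ i → M i j = 0) : IsNilpotent M := by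
  refine ⟨Fintype.card m, ?_⟩
  have h_charpoly : M.charpoly = Polynomial.X ^ Fintype.card m := by
    rw [Matrix.charpoly_of_isUpperTriangular M fun i j hji => hM i j hji.le]
    simp [hM _ _ le_rfl]
  simpa [h_charpoly] using M.aeval_self_charpoly

lemma isNilpotent_fromBlocks {l m R : Type*} [Fintype l] [Fintype m] [DecidableEq l]
    [DecidableEq m] [Semiring R] {A : Matrix l l R} {D : Matrix m m R} (hA : IsNilpotent A)
    (hD : IsNilpotent D) : IsNilpotent (Matrix.fromBlocks A 0 0 D) := by
  obtain ⟨⟨k, hk⟩, r, hr⟩ := hA, hD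
  refine ⟨k + r, ?_⟩
  rw [Matrix.fromBlocks_diagonal_pow, pow_add, hk, zero_mul, pow_add D, hr, mul_zero,
    Matrix.fromBlocks_zero]

section LinearVectorField

variable {σ R : Type*} [Fintype σ] [CommRing R]

/-- The linear vector field `∑ i j, A i j x_i ∂/∂x_j`, as a derivation of the polynomial ring.
The row index is the coefficient variable and the column index the direction of differentiation,
so that `A ↦ linearVectorField A` is multiplicative on linear forms. -/
def linearVectorField (A : Matrix σ σ R) :
    Derivation R (MvPolynomial σ R) (MvPolynomial σ R) :=
  mkDerivation R fun j => ∑ i, A i j • X i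

lemma linearVectorField_X (A : Matrix σ σ R) (j : σ) :
    linearVectorField A (X j) = ∑ i, A i j • X i :=
  mkDerivation_X R _ j

lemma linearVectorField_eq_sum_pderiv (A : Matrix σ σ R) (p : MvPolynomial σ R) :
    linearVectorField A p = ∑ i, ∑ j, A i j • (X i * pderiv j p) := by
  classical
  induction p using MvPolynomial.induction_on with
  | C a => simp
  | add p q hp hq => simp only [map_add, hp, hq, mul_add, smul_add, Finset.sum_add_distrib]
  | mul_X p k hp =>
    simp only [Derivation.leibniz, linearVectorField_X, hp, pderiv_X, smul_eq_mul, mul_add,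
      smul_add, Finset.sum_add_distrib, Finset.mul_sum]
    congr 1
    · simp [Pi.single_apply, mul_comm]
    · simp only [mul_smul_comm, mul_left_comm]

lemma linearVectorField_linearVectorField_X (A B : Matrix σ σ R) (j : σ) :
    linearVectorField A (linearVectorField B (X j)) = ∑ i, (A * B) i j • X i := by
  simp only [linearVectorField_X, map_sum, Derivation.map_smul, Finset.smul_sum, smul_smul,
    Matrix.mul_apply, Finset.sum_smul]
  rw [Finset.sum_comm]
  simp only [mul_comm]

lemma commute_linearVectorField {A B : Matrix σ σ R} (h : Commute A B) :
    Commute (linearVectorField A : Module.End R (MvPolynomial σ R)) (linearVectorField B) := by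
  rw [commute_iff_lie_eq, ← Derivation.commutator_coe_linear_map]
  suffices ⁅linearVectorField A, linearVectorField B⁆ = 0 by rw [this]; rfl
  refine derivation_ext fun j => ?_
  rw [Derivation.commutator_apply, linearVectorField_linearVectorField_X,
    linearVectorField_linearVectorField_X, h.eq, sub_self, Derivation.zero_apply]

variable [DecidableEq σ]

lemma iterate_linearVectorField_X (A : Matrix σ σ R) (k : ℕ) (j : σ) :
    (linearVectorField A)^[k] (X j) = linearVectorField (A ^ k) (X j) := by
  induction k with
  | zero => simp [linearVectorField_X, Matrix.one_apply]
  | succ k ih =>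
    rw [Function.iterate_succ_apply', ih, linearVectorField_linearVectorField_X, pow_succ',
      linearVectorField_X]

lemma maxGenEigenspace_zero_linearVectorField {N : Matrix σ σ R} (hN : IsNilpotent N) :
    Module.End.maxGenEigenspace (linearVectorField N).toLinearMap 0 = ⊤ := by
  obtain ⟨k, hk⟩ := hN
  refine Submodule.eq_top_iff'.mpr fun p => ?_
  obtain ⟨l, hl⟩ := exists_iterate_derivation_eq_zero (linearVectorField N)
    (fun j => ⟨k, by simp [iterate_linearVectorField_X, hk, linearVectorField_X]⟩) p
  rw [Module.End.mem_maxGenEigenspace]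
  refine ⟨l, ?_⟩
  rwa [zero_smul, sub_zero, Module.End.pow_apply]

lemma coeff_linearVectorField_diagonal (w : σ → R) (m : σ →₀ ℕ) (p : MvPolynomial σ R) :
    coeff m (linearVectorField (Matrix.diagonal w) p) = (∑ i, w i * m i) * coeff m p := by
  simp [linearVectorField_eq_sum_pderiv, Matrix.diagonal_apply, coeff_sum, coeff_X_mul_pderiv,
    Finset.sum_mul, mul_assoc]

variable [IsReduced R]

lemma maxGenEigenspace_linearVectorField_diagonal (w : σ → R) (μ : R) :
    Module.End.maxGenEigenspace (linearVectorField (Matrix.diagonal w)).toLinearMap μ =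
      Module.End.eigenspace (linearVectorField (Matrix.diagonal w)).toLinearMap μ := by
  set S : Module.End R (MvPolynomial σ R) := (linearVectorField (Matrix.diagonal w)).toLinearMap
  have coeff_S_sub (m : σ →₀ ℕ) (p : MvPolynomial σ R) :
      coeff m ((S - μ • 1) p) = (∑ i, w i * m i - μ) * coeff m p := by
    simp [S, coeff_linearVectorField_diagonal, sub_mul]
  have coeff_S_sub_pow (k : ℕ) (m : σ →₀ ℕ) (p : MvPolynomial σ R) :
      coeff m (((S - μ • 1) ^ k) p) = (∑ i, w i * m i - μ) ^ k * coeff m p := by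
    induction k with
    | zero => simp
    | succ k ih => rw [pow_succ', Module.End.mul_apply, coeff_S_sub, ih, pow_succ', mul_assoc]
  refine le_antisymm (fun p hp => ?_) ((S.genEigenspace μ).mono le_top)
  obtain ⟨k, hk⟩ := (Module.End.mem_maxGenEigenspace S μ p).mp hp
  rw [Module.End.mem_eigenspace_iff, ← sub_eq_zero]
  ext m
  have hm : (∑ i, w i * m i - μ) ^ k * coeff m p = 0 := by
    rw [← coeff_S_sub_pow, hk, coeff_zero]
  calc coeff m (S p - μ • p) = (∑ i, w i * m i - μ) * coeff m p := coeff_S_sub m p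
    _ = 0 := eq_zero_of_pow_eq_zero (n := k + 1) <| by
      rw [mul_pow, pow_succ, pow_succ' (coeff m p), mul_mul_mul_comm, hm, zero_mul]

theorem linearVectorField_diagonal_add_eq_smul_iff {w : σ → R} {N : Matrix σ σ R}
    (hN : IsNilpotent N) (hcomm : Commute (Matrix.diagonal w) N) (μ : R)
    (p : MvPolynomial σ R) :
    linearVectorField (Matrix.diagonal w) p + linearVectorField N p = μ • p ↔
      linearVectorField (Matrix.diagonal w) p = μ • p ∧ linearVectorField N p = 0 := by
  have h_eigenspace := eigenspace_add_eq_inf_ker (commute_linearVectorField hcomm)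
    (maxGenEigenspace_linearVectorField_diagonal w μ) (maxGenEigenspace_zero_linearVectorField hN)
  simpa [Module.End.mem_eigenspace_iff] using SetLike.ext_iff.mp h_eigenspace p

end LinearVectorField

section HolomorphicVectorField

variable {ι κ R : Type*} [Fintype ι] [Fintype κ] [CommRing R]

/-- The linear vector field `∑ i j, A i j z_i ∂/∂z_j` acting on polynomials in two groups of
variables `z` (indexed by `ι`) and `w` (indexed by `κ`), the latter treated as constants. For
`κ = ι` and `w = z̄` it is a holomorphic vector field acting on polynomials in `(z, z̄)`. -/
def holomorphicVectorField (A : Matrix ι ι R) :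
    Derivation R (MvPolynomial (ι ⊕ κ) R) (MvPolynomial (ι ⊕ κ) R) :=
  linearVectorField (Matrix.fromBlocks A 0 0 0)

lemma holomorphicVectorField_eq_sum_pderiv (A : Matrix ι ι R) (p : MvPolynomial (ι ⊕ κ) R) :
    holomorphicVectorField A p =
      ∑ i, ∑ j, A i j • (X (Sum.inl i) * pderiv (Sum.inl j) p) := by
  simp [holomorphicVectorField, linearVectorField_eq_sum_pderiv]

theorem holomorphicVectorField_diagonal_add_eq_smul_iff [DecidableEq ι] [IsReduced R]
    {w : ι → R} {N : Matrix ι ι R} (hN : IsNilpotent N) (hcomm : Commute (Matrix.diagonal w) N)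
    (μ : R) (p : MvPolynomial (ι ⊕ κ) R) :
    holomorphicVectorField (Matrix.diagonal w) p + holomorphicVectorField N p = μ • p ↔
      holomorphicVectorField (Matrix.diagonal w) p = μ • p ∧ holomorphicVectorField N p = 0 := by
  classical
  have h_diag : Matrix.fromBlocks (Matrix.diagonal w) 0 0 0 =
      Matrix.diagonal (Sum.elim w (0 : κ → R)) := by
    rw [← Matrix.fromBlocks_diagonal, Matrix.diagonal_zero']
  have h_comm : Commute (Matrix.diagonal (Sum.elim w (0 : κ → R)))
      (Matrix.fromBlocks N 0 0 0) := by
    rw [← h_diag, commute_iff_eq]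
    simp [Matrix.fromBlocks_multiply, hcomm.eq]
  simp only [holomorphicVectorField, h_diag]
  exact linearVectorField_diagonal_add_eq_smul_iff
    (isNilpotent_fromBlocks hN IsNilpotent.zero) h_comm μ p

end HolomorphicVectorField

lemma eq_zero_of_eval_ofReal_eq_zero {σ : Type*} {p : MvPolynomial σ ℂ}
    (h : ∀ x : σ → ℝ, eval (fun i => (x i : ℂ)) p = 0) : p = 0 := by
  refine funext_set (fun _ => Set.range ((↑) : ℝ → ℂ))
    (fun _ => Set.infinite_range_of_injective ofReal_injective) fun z hz => ?_
  choose x hx using fun i => hz i (Set.mem_univ i)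
  rw [← _root_.funext hx, h, map_zero]

-- In the coordinates `z = x + iy`, `w = x - iy` the conjugate pairs `(z, z̄)` are exactly the real
-- points `(x, y)`.
lemma eq_zero_of_eval_sumElim_star_eq_zero {ι : Type*} {p : MvPolynomial (ι ⊕ ι) ℂ}
    (h : ∀ z : ι → ℂ, eval (Sum.elim z (star z)) p = 0) : p = 0 := by
  let q : MvPolynomial (ι ⊕ ι) ℂ := bind₁ (Sum.elim
    (fun j => X (Sum.inl j) + C I * X (Sum.inr j))
    (fun j => X (Sum.inl j) - C I * X (Sum.inr j))) p
  have eval_q (x y : ι → ℂ) : eval (Sum.elim x y) q =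
      eval (Sum.elim (fun j => x j + I * y j) (fun j => x j - I * y j)) p := by
    simp only [q, eval, eval₂Hom_bind₁]
    congr 2
    ext (j | j) <;> simp
  have hq : q = 0 := eq_zero_of_eval_ofReal_eq_zero fun x => by
    rw [← Sum.elim_comp_inl_inr (fun i => (x i : ℂ)), eval_q,
      ← h fun j => x (Sum.inl j) + I * x (Sum.inr j)]
    congr 2
    ext (j | j) <;> simp [sub_eq_add_neg]
  refine MvPolynomial.funext fun v => ?_
  obtain ⟨z, w, rfl⟩ : ∃ z w, v = Sum.elim z w := ⟨_, _, (Sum.elim_comp_inl_inr v).symm⟩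
  have h_eval := eval_q (fun j => (z j + w j) / 2) (fun j => -I * (z j - w j) / 2)
  rw [hq, map_zero] at h_eval
  rw [map_zero, h_eval]
  congr 2
  ext (j | j) <;> simp only [Sum.elim_inl, Sum.elim_inr]
  · linear_combination (z j - w j) / 2 * I_sq
  · linear_combination -(z j - w j) / 2 * I_sq

lemma forall_eval_sumElim_star_eq_iff {ι : Type*} {p q : MvPolynomial (ι ⊕ ι) ℂ} :
    (∀ z : ι → ℂ, eval (Sum.elim z (star z)) p = eval (Sum.elim z (star z)) q) ↔ p = q := by
  refine ⟨fun h => sub_eq_zero.mp (eq_zero_of_eval_sumElim_star_eq_zero fun z => ?_),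
    fun h z => by rw [h]⟩
  rw [map_sub, h, sub_self]

section Polarization

variable {n : ℕ}

/-- The polynomial `∑ c_{αβ} z^α w^β` in independent variables `z = X ∘ Sum.inl` and
`w = X ∘ Sum.inr`, whose restriction to `w = z̄` is `QEval c`. -/
def polarization (c : ((Fin n →₀ ℕ) × (Fin n →₀ ℕ)) →₀ ℂ) : MvPolynomial (Fin n ⊕ Fin n) ℂ :=
  c.sum fun p a => monomial (Finsupp.sumFinsuppEquivProdFinsupp.symm p) a

lemma eval_polarization (c : ((Fin n →₀ ℕ) × (Fin n →₀ ℕ)) →₀ ℂ) (z : Fin n → ℂ) :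
    eval (Sum.elim z (star z)) (polarization c) = QEval c z := by
  rw [polarization, QEval, Finsupp.sum, Finsupp.sum, map_sum]
  refine Finset.sum_congr rfl fun p _ => ?_
  rw [eval_monomial, Finsupp.prod_fintype _ _ (by simp), Fintype.prod_sum_type]
  simp [mul_assoc]

lemma eval_pderiv_inl_polarization (c : ((Fin n →₀ ℕ) × (Fin n →₀ ℕ)) →₀ ℂ) (k : Fin n)
    (z : Fin n → ℂ) :
    eval (Sum.elim z (star z)) (pderiv (Sum.inl k) (polarization c)) = QDeriv c k z := by
  classical
  rw [polarization, QDeriv, Finsupp.sum, Finsupp.sum, map_sum, map_sum]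
  refine Finset.sum_congr rfl fun p _ => ?_
  rw [pderiv_monomial, eval_monomial, Finsupp.prod_fintype _ _ (by simp), Fintype.prod_sum_type]
  simp [mul_assoc, Finsupp.single_apply]

lemma eval_holomorphicVectorField_polarization (A : Matrix (Fin n) (Fin n) ℂ)
    (c : ((Fin n →₀ ℕ) × (Fin n →₀ ℕ)) →₀ ℂ) (z : Fin n → ℂ) :
    eval (Sum.elim z (star z)) (holomorphicVectorField A (polarization c)) =
      ∑ i, ∑ j, A i j * z i * QDeriv c j z := by
  simp [holomorphicVectorField_eq_sum_pderiv, eval_pderiv_inl_polarization, smul_eval, mul_assoc]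

end Polarization

section JordanShift

variable {n : ℕ} [NeZero n] {R : Type*} [CommRing R]

/-- The matrix of the nilpotent field `Z = ∑_{j ∈ J} z_j ∂/∂z_{j+1}`. Addition in `Fin n` wraps
around, so this is the nilpotent part of a Jordan form only if `J` omits the last index. -/
def jordanShift (J : Finset (Fin n)) : Matrix (Fin n) (Fin n) R :=
  .of fun i j => if i ∈ J ∧ j = i + 1 then 1 else 0

lemma isNilpotent_jordanShift {J : Finset (Fin n)} (hJ : ∀ j ∈ J, (j : ℕ) + 1 < n) :
    IsNilpotent (jordanShift J : Matrix (Fin n) (Fin n) R) := by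
  refine isNilpotent_of_strictlyUpperTriangular fun i j hji => if_neg ?_
  rintro ⟨hi, rfl⟩
  have h_val : ((i + 1 : Fin n) : ℕ) = i + 1 := Fin.val_add_one_of_lt' (hJ i hi)
  have : ((i + 1 : Fin n) : ℕ) ≤ i := hji
  omega

lemma commute_diagonal_jordanShift {lam : Fin n → R} {J : Finset (Fin n)}
    (hJordan : ∀ j ∈ J, lam (j + 1) = lam j) :
    Commute (Matrix.diagonal lam) (jordanShift J) := by
  ext i j
  simp only [Matrix.diagonal_mul, Matrix.mul_diagonal, jordanShift, Matrix.of_apply]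
  split_ifs with h
  · rw [h.2, hJordan i h.1, mul_comm]
  · rw [mul_zero, zero_mul]

lemma sum_jordanShift_mul (J : Finset (Fin n)) (z v : Fin n → R) :
    ∑ i, ∑ j, jordanShift J i j * z i * v j = ∑ j ∈ J, z j * v (j + 1) := by
  simp [jordanShift, ite_and, Finset.sum_ite_mem]

end JordanShift

theorem stmt0_general {n : ℕ} (c : ((Fin n →₀ ℕ) × (Fin n →₀ ℕ)) →₀ ℂ) {lam : Fin n → ℂ}
    {N : Matrix (Fin n) (Fin n) ℂ} (hN : IsNilpotent N) (hcomm : Commute (Matrix.diagonal lam) N)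
    (μ : ℂ) :
    (∀ z : Fin n → ℂ,
        (∑ j, lam j * z j * QDeriv c j z) + (∑ i, ∑ j, N i j * z i * QDeriv c j z)
          = μ * QEval c z)
      ↔ ((∀ z : Fin n → ℂ, (∑ j, lam j * z j * QDeriv c j z) = μ * QEval c z) ∧
          ∀ z : Fin n → ℂ, (∑ i, ∑ j, N i j * z i * QDeriv c j z) = 0) := by
  have h_iff := holomorphicVectorField_diagonal_add_eq_smul_iff hN hcomm μ (polarization c)
  simpa [← forall_eval_sumElim_star_eq_iff, eval_holomorphicVectorField_polarization,
    eval_polarization, smul_eval, Matrix.diagonal_apply] using h_iff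

/-- For a real-valued homogeneous polynomial `Q(z,z̄)` of degree
`d ≥ 2` without pluriharmonic terms, and `W = X + Z` a linear holomorphic vector
field in Jordan normal form with diagonal part `X = Σ λ_j z_j ∂/∂z_j` and nilpotent
part `Z = Σ_{j∈J₁} z_j ∂/∂z_{j+1}`, one has `W(Q) = Q` iff `X(Q) = Q` and `Z(Q) = 0`. -/
theorem stmt0 (n : ℕ) [NeZero n] (d : ℕ) (hd : 2 ≤ d)
    (c : ((Fin n →₀ ℕ) × (Fin n →₀ ℕ)) →₀ ℂ)
    (hreal : ∀ α β : Fin n →₀ ℕ, c (α, β) = (starRingEnd ℂ) (c (β, α)))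
    (hhom : ∀ p ∈ c.support, (p.1.sum fun _ e => e) + (p.2.sum fun _ e => e) = d)
    (hnoplh : ∀ p ∈ c.support, p.1 ≠ 0 ∧ p.2 ≠ 0)
    (lam : Fin n → ℂ) (J₁ : Finset (Fin n))
    (hJ : ∀ j ∈ J₁, (j : ℕ) + 1 < n)
    (hJordan : ∀ j ∈ J₁, lam (j + 1) = lam j) :
    (∀ z : Fin n → ℂ,
        (∑ j, lam j * z j * QDeriv c j z) + (∑ j ∈ J₁, z j * QDeriv c (j + 1) z)
          = QEval c z)
      ↔ ((∀ z : Fin n → ℂ, (∑ j, lam j * z j * QDeriv c j z) = QEval c z) ∧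
          ∀ z : Fin n → ℂ, (∑ j ∈ J₁, z j * QDeriv c (j + 1) z) = 0) := by
  simpa only [sum_jordanShift_mul, one_mul] using
    stmt0_general c (isNilpotent_jordanShift hJ) (commute_diagonal_jordanShift hJordan) 1
end
end

section
/- Let Q(z,z̄) be the real-valued polynomial on ℂ³ given by Q(z,z̄) = (z₁²z₂z₃³ + z₁z₂⁴z₃)·z̄₁² + z₁²·(z̄₁²z̄₂z̄₃³ + z̄₁z̄₂⁴z̄₃) + z₁²z₂²z̄₁²z̄₂² (homogeneous of degree d = 8), and let M_Q = {(z,w) ∈ ℂ³×ℂ : Im w = Q(z,z̄)}. Then (1) the vector field X = 11i·z₁ ∂/∂z₁ + 3i·z₂ ∂/∂z₂ − i·z₃ ∂/∂z₃ is a rotation of M_Q (so M_Q possesses a nonzero imaginary diagonal rotation), and (2) g₁ = {0}, i.e. the only infinitesimal CR automorphism of M_Q all of whose monomial terms have weight 1 is the zero field. -/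
open Complex

noncomputable section

/-- Shorthand for `conj (z j)`. -/
def cc (z : Fin 3 → ℂ) (j : Fin 3) : ℂ := (starRingEnd ℂ) (z j)

/-- The polynomial
`Q(z,z̄) = (z₁²z₂z₃³ + z₁z₂⁴z₃)·z̄₁² + z₁²·(z̄₁²z̄₂z̄₃³ + z̄₁z̄₂⁴z̄₃) + z₁²z₂²z̄₁²z̄₂²`,
homogeneous of degree `8`. -/
def Qe4 (z : Fin 3 → ℂ) : ℂ :=
  ((z 0) ^ 2 * z 1 * (z 2) ^ 3 + z 0 * (z 1) ^ 4 * z 2) * (cc z 0) ^ 2 +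
    (z 0) ^ 2 * ((cc z 0) ^ 2 * cc z 1 * (cc z 2) ^ 3 + cc z 0 * (cc z 1) ^ 4 * cc z 2) +
    (z 0) ^ 2 * (z 1) ^ 2 * (cc z 0) ^ 2 * (cc z 1) ^ 2

/-- The holomorphic partial derivatives `∂Q/∂z_j` of `Qe4`. -/
def Qd4 : Fin 3 → (Fin 3 → ℂ) → ℂ :=
  ![fun z =>
      (2 * z 0 * z 1 * (z 2) ^ 3 + (z 1) ^ 4 * z 2) * (cc z 0) ^ 2 +
        2 * z 0 * ((cc z 0) ^ 2 * cc z 1 * (cc z 2) ^ 3 + cc z 0 * (cc z 1) ^ 4 * cc z 2) +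
        2 * z 0 * (z 1) ^ 2 * (cc z 0) ^ 2 * (cc z 1) ^ 2,
    fun z =>
      ((z 0) ^ 2 * (z 2) ^ 3 + 4 * z 0 * (z 1) ^ 3 * z 2) * (cc z 0) ^ 2 +
        2 * (z 0) ^ 2 * z 1 * (cc z 0) ^ 2 * (cc z 1) ^ 2,
    fun z =>
      (3 * (z 0) ^ 2 * z 1 * (z 2) ^ 2 + z 0 * (z 1) ^ 4) * (cc z 0) ^ 2]

/-- `Σ F_j ∂/∂z_j + G ∂/∂w` is an infinitesimal CR automorphism of `M_Q`,
for `Q` with evaluation function `Qe` and holomorphic derivatives `Qd`. -/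
def IsInfCRF (Qe : (Fin 3 → ℂ) → ℂ) (Qd : Fin 3 → (Fin 3 → ℂ) → ℂ)
    (F : Fin 3 → MvPolynomial (Fin 4) ℂ) (G : MvPolynomial (Fin 4) ℂ) : Prop :=
  ∀ (z : Fin 3 → ℂ) (u : ℝ),
    (MvPolynomial.eval (Fin.snoc z ((u : ℂ) + Complex.I * Qe z)) G / (2 * Complex.I) -
      ∑ j, MvPolynomial.eval (Fin.snoc z ((u : ℂ) + Complex.I * Qe z)) (F j) * Qd j z).re = 0

/-- The linear field `Σ_{j,k} A_{jk} z_k ∂/∂z_j` is a rotation of `M_Q`. -/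
def IsRotF (Qd : Fin 3 → (Fin 3 → ℂ) → ℂ) (A : Matrix (Fin 3) (Fin 3) ℂ) : Prop :=
  ∀ z : Fin 3 → ℂ, (∑ j, (∑ k, A j k * z k) * Qd j z).re = 0

/-- `A` is diagonalizable over `ℂ` with all eigenvalues purely imaginary. -/
def ImDiag (A : Matrix (Fin 3) (Fin 3) ℂ) : Prop :=
  ∃ (Pm : Matrix (Fin 3) (Fin 3) ℂ) (dv : Fin 3 → ℂ),
    IsUnit Pm ∧ A * Pm = Pm * Matrix.diagonal dv ∧ ∀ j, (dv j).re = 0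

/-- Weight of the monomial field `z^δ w^m ∂/∂z_j` (here `d = 8`). -/
def wZ (m : Fin 4 →₀ ℕ) : ℚ :=
  ((m 0 : ℚ) + (m 1 : ℚ) + (m 2 : ℚ)) / 8 + (m 3 : ℚ) - 1 / 8

/-- Weight of the monomial field `z^δ w^m ∂/∂w` (here `d = 8`). -/
def wW (m : Fin 4 →₀ ℕ) : ℚ :=
  ((m 0 : ℚ) + (m 1 : ℚ) + (m 2 : ℚ)) / 8 + (m 3 : ℚ) - 1

/-
Polarizing the defining identity makes `z̄` an independent variable `ζ`. Number coordinates from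
`0` and write `Q = p₂(z) p₀(z̄) + p₁(z) p₁(z̄) + p₀(z) p₂(z̄)`. In a field of weight one,
`G = c w²` and `∑ j, F_j ∂p_k/∂z_j = ξ_k(z) + w η_k(z)`. Comparing bidegrees in `(z, ζ)` gives
`ξ = 0` and `η = c p`. At a point where `∂p₂/∂z₂` vanishes the three equations
`∑ j, F_j ∂p_k/∂z_j = c w p_k` involve only two of the `F_j` and force `c = 0`; then `F = 0`,
since the Jacobian determinant of `p` is not the zero polynomial.
-/

open MvPolynomial
open scoped ComplexConjugate

section MvPolynomial

variable {R : Type*} [CommSemiring R]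

lemma eval_snoc_rename_castSucc {n : ℕ} (f : MvPolynomial (Fin n) R) (z : Fin n → R) (w : R) :
    eval (Fin.snoc z w) (rename Fin.castSucc f) = eval z f := by
  rw [eval_rename]
  congr 2
  ext i
  simp

lemma eval_smul_of_isHomogeneous {σ : Type*} {p : MvPolynomial σ R} {n : ℕ}
    (hp : p.IsHomogeneous n) (s : R) (z : σ → R) : eval (s • z) p = s ^ n * eval z p := by
  simp only [eval_eq, Finset.mul_sum]
  refine Finset.sum_congr rfl fun m hm => ?_
  simp only [Pi.smul_apply, smul_eq_mul, mul_pow, Finset.prod_mul_distrib,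
    Finset.prod_pow_eq_pow_sum, ← hp.degree_eq_sum_deg_support hm]
  ring

lemma isWeightedHomogeneous_rename {σ τ : Type*} {f : σ → τ} {w : τ → ℕ} {p : MvPolynomial σ R}
    {n : ℕ} (hp : p.IsWeightedHomogeneous (w ∘ f) n) :
    (rename f p).IsWeightedHomogeneous w n := by
  intro m hm
  obtain ⟨u, rfl, hu⟩ := coeff_rename_ne_zero f p m hm
  rw [← hp hu]
  exact Finsupp.linearCombination_mapDomain ℕ f u

lemma isWeightedHomogeneous_map {R' σ : Type*} [CommSemiring R'] (g : R →+* R') {w : σ → ℕ}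
    {p : MvPolynomial σ R} {n : ℕ} (hp : p.IsWeightedHomogeneous w n) :
    (map g p).IsWeightedHomogeneous w n := fun m hm =>
  hp fun h => hm (by rw [coeff_map, h, map_zero])

lemma exists_eq_sum_rename_castSucc_mul_X_last_pow {k d n : ℕ} (hd : 0 < d)
    {p : MvPolynomial (Fin (k + 1)) R}
    (hp : p.IsWeightedHomogeneous (Fin.snoc (fun _ => 1) d : Fin (k + 1) → ℕ) n) :
    ∃ f : ℕ → MvPolynomial (Fin k) R, (∀ i, (f i).IsHomogeneous (n - d * i)) ∧
      p = ∑ i ∈ Finset.range (n / d + 1), rename Fin.castSucc (f i) * X (Fin.last k) ^ i := by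
  let initExp (m : Fin (k + 1) →₀ ℕ) : Fin k →₀ ℕ := m.comapDomain Fin.castSucc
    (Fin.castSucc_injective k).injOn
  have weight_eq {m} (hm : m ∈ p.support) : (initExp m).degree + d * m (Fin.last k) = n := by
    rw [← hp (mem_support_iff.1 hm), Finsupp.weight_eq_sum, Fin.sum_univ_castSucc,
      Finsupp.degree_eq_sum]
    simp [initExp, mul_comm]
  have eq_init_add (m : Fin (k + 1) →₀ ℕ) : m = (initExp m).mapDomain Fin.castSucc +
      Finsupp.single (Fin.last k) (m (Fin.last k)) := by
    ext j
    induction j using Fin.lastCases with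
    | last => simp [Finsupp.mapDomain_of_notMem_range]
    | cast j =>
      simp [initExp, Finsupp.mapDomain_apply (Fin.castSucc_injective k),
        (Fin.castSucc_lt_last j).ne]
  refine ⟨fun i => ∑ m ∈ p.support with m (Fin.last k) = i, monomial (initExp m) (p.coeff m),
    fun i => ?_, ?_⟩
  · refine IsHomogeneous.sum _ _ _ fun m hm => isHomogeneous_monomial _ ?_
    obtain ⟨hmp, rfl⟩ := Finset.mem_filter.1 hm
    exact (Nat.sub_eq_of_eq_add (weight_eq hmp).symm).symm
  · have last_mem {m} (hm : m ∈ p.support) :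
        m (Fin.last k) ∈ Finset.range (n / d + 1) := by
      rw [Finset.mem_range, Nat.lt_succ_iff, Nat.le_div_iff_mul_le hd, mul_comm]
      exact (Nat.le_add_left _ _).trans_eq (weight_eq hm)
    conv_lhs => rw [p.as_sum, ← Finset.sum_fiberwise_of_maps_to fun m hm => last_mem hm]
    refine Finset.sum_congr rfl fun i _ => ?_
    rw [map_sum, Finset.sum_mul]
    refine Finset.sum_congr rfl fun m hm => ?_
    obtain ⟨-, rfl⟩ := Finset.mem_filter.1 hm
    rw [rename_monomial, X_pow_eq_monomial, monomial_mul, mul_one, ← eq_init_add]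

lemma exists_eval_snoc_eq_sum {k d n : ℕ} (hd : 0 < d) {p : MvPolynomial (Fin (k + 1)) R}
    (hp : p.IsWeightedHomogeneous (Fin.snoc (fun _ => 1) d : Fin (k + 1) → ℕ) n) :
    ∃ f : ℕ → MvPolynomial (Fin k) R, (∀ i, (f i).IsHomogeneous (n - d * i)) ∧
      ∀ z w, eval (Fin.snoc z w) p = ∑ i ∈ Finset.range (n / d + 1), eval z (f i) * w ^ i := by
  obtain ⟨f, hf, hp_eq⟩ := exists_eq_sum_rename_castSucc_mul_X_last_pow hd hp
  refine ⟨f, hf, fun z w => ?_⟩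
  simp only [hp_eq, map_sum, map_mul, map_pow, eval_snoc_rename_castSucc, eval_X, Fin.snoc_last]

lemma exists_eval_snoc_zero_eq_mul_pow {k d m : ℕ} (hd : 0 < d)
    {p : MvPolynomial (Fin (k + 1)) R}
    (hp : p.IsWeightedHomogeneous (Fin.snoc (fun _ => 1) d : Fin (k + 1) → ℕ) (d * m)) :
    ∃ c : R, ∀ w, eval (Fin.snoc 0 w) p = c * w ^ m := by
  obtain ⟨f, hf, hp_eval⟩ := exists_eval_snoc_eq_sum hd hp
  refine ⟨eval 0 (f m), fun w => ?_⟩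
  rw [hp_eval, Nat.mul_div_cancel_left m hd, Finset.sum_range_succ]
  refine (congrArg (· + _) ?_).trans (zero_add _)
  refine Finset.sum_eq_zero fun i hi => ?_
  have hdeg : d * m - d * i ≠ 0 :=
    Nat.sub_ne_zero_of_lt (Nat.mul_lt_mul_of_pos_left (Finset.mem_range.1 hi) hd)
  rw [← zero_smul R (0 : Fin k → R), eval_smul_of_isHomogeneous (hf i), zero_pow hdeg, zero_mul,
    zero_mul]

/-- The image `∑ j, F j * ∂p/∂z_j` of `p(z)` under the vector field `∑ j, F j ∂/∂z_j`, whose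
coefficients also depend on the extra, last variable `w`. -/
def fieldDeriv {n : ℕ} (F : Fin n → MvPolynomial (Fin (n + 1)) R) (p : MvPolynomial (Fin n) R) :
    MvPolynomial (Fin (n + 1)) R :=
  ∑ j, F j * rename Fin.castSucc (pderiv j p)

lemma eval_snoc_fieldDeriv {n : ℕ} (F : Fin n → MvPolynomial (Fin (n + 1)) R)
    (p : MvPolynomial (Fin n) R) (z : Fin n → R) (w : R) :
    eval (Fin.snoc z w) (fieldDeriv F p) =
      ∑ j, eval (Fin.snoc z w) (F j) * eval z (pderiv j p) := by
  simp only [fieldDeriv, map_sum, map_mul, eval_snoc_rename_castSucc]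

lemma isWeightedHomogeneous_fieldDeriv {n a b d : ℕ} {F : Fin n → MvPolynomial (Fin (n + 1)) R}
    {p : MvPolynomial (Fin n) R}
    (hF : ∀ j, (F j).IsWeightedHomogeneous (Fin.snoc (fun _ => 1) d : Fin (n + 1) → ℕ) b)
    (hp : p.IsHomogeneous a) :
    (fieldDeriv F p).IsWeightedHomogeneous (Fin.snoc (fun _ => 1) d : Fin (n + 1) → ℕ)
      (b + (a - 1)) := by
  refine IsWeightedHomogeneous.sum _ _ _ fun j _ => (hF j).mul (isWeightedHomogeneous_rename ?_)
  have hw : (Fin.snoc (fun _ => 1) d : Fin (n + 1) → ℕ) ∘ Fin.castSucc = 1 := by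
    ext i
    simp
  rw [hw]
  exact hp.pderiv

end MvPolynomial

lemma eq_zero_of_fieldDeriv_eq_zero {R : Type*} [CommRing R] [IsDomain R] {n : ℕ}
    {F : Fin n → MvPolynomial (Fin (n + 1)) R} {p : Fin n → MvPolynomial (Fin n) R}
    (hdet : (Matrix.of fun k j => pderiv j (p k)).det ≠ 0) (h : ∀ k, fieldDeriv F (p k) = 0) :
    F = 0 := by
  let ren : MvPolynomial (Fin n) R →+* MvPolynomial (Fin (n + 1)) R :=
    (rename Fin.castSucc).toRingHom
  have hdet' : (ren.mapMatrix (Matrix.of fun k j => pderiv j (p k))).det ≠ 0 := by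
    rw [← RingHom.map_det]
    exact (map_ne_zero_iff ren (rename_injective _ (Fin.castSucc_injective n))).2 hdet
  refine Matrix.eq_zero_of_mulVec_eq_zero hdet' (funext fun k => ?_)
  rw [Pi.zero_apply, ← h k]
  simp [ren, fieldDeriv, Matrix.mulVec, dotProduct, mul_comm]

section IdentityPrinciple

lemma eq_zero_of_forall_ofReal_eq_zero {f : ℂ → ℂ} (hf : Differentiable ℂ f)
    (h : ∀ t : ℝ, f t = 0) : f = 0 := by
  have hreal : Filter.Tendsto ((↑) : ℝ → ℂ) (nhdsWithin 0 {0}ᶜ) (nhdsWithin 0 {0}ᶜ) :=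
    ofRealCLM.hasDerivAt.tendsto_nhdsNE one_ne_zero
  exact AnalyticOnNhd.eq_of_frequently_eq (fun t _ => hf.analyticAt t)
    (fun t _ => analyticAt_const) (hreal.frequently (Filter.Frequently.of_forall h))

lemma eq_zero_of_forall_star_ofReal {ι : Type*} [Finite ι] {f : (ι → ℂ) × (ι → ℂ) × ℂ → ℂ}
    (hf : Differentiable ℂ f) (h : ∀ (z : ι → ℂ) (u : ℝ), f (z, star z, u) = 0) : f = 0 := by
  have := Fintype.ofFinite ι
  ext ⟨z, ζ, w⟩
  -- `line` is the complexification of a real line inside `{(z, star z, u)}`, and `line I` is the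
  -- given point.
  let a : ι → ℂ := (1 / 2 : ℂ) • (z + star ζ)
  let b : ι → ℂ := (-I / 2) • (z - star ζ)
  let line (t : ℂ) : (ι → ℂ) × (ι → ℂ) × ℂ := (a + t • b, star a + t • star b, w.re + t * w.im)
  have hline (t : ℝ) : f (line t) = 0 := by
    have hstar : star a + (t : ℂ) • star b = star (a + (t : ℂ) • b) := by
      ext j
      simp
    simp only [line, hstar]
    exact_mod_cast h (a + (t : ℂ) • b) (w.re + t * w.im)
  have hzero : f ∘ line = 0 :=
    eq_zero_of_forall_ofReal_eq_zero (hf.comp (by fun_prop)) hline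
  have hI : line I = (z, ζ, w) := by
    refine Prod.ext (funext fun j => ?_) (Prod.ext (funext fun j => ?_) ?_)
    · simp only [line, a, b, Pi.add_apply, Pi.sub_apply, Pi.smul_apply, smul_eq_mul]
      linear_combination (-(z j - star ζ j) / 2) * I_sq
    · simp only [line, a, b, star_add, star_smul, star_sub, star_star, Pi.add_apply, Pi.sub_apply,
        Pi.smul_apply, Pi.star_apply, smul_eq_mul, RCLike.star_def, map_div₀, map_neg, map_one,
        map_ofNat, conj_I]
      linear_combination ((conj (z j) - ζ j) / 2) * I_sq
    · simp [line, mul_comm I]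
  simpa [hI] using congrFun hzero I

end IdentityPrinciple

section RevPairing

/-- The bilinear form `∑ k, x (n - 1 - k) * y k`. The model polynomial is
`Q(z, z̄) = revPairing (p z) (p z̄)` for a vector `p` of polynomials. -/
def revPairing {n : ℕ} (x y : Fin n → ℂ) : ℂ := ∑ k, x k.rev * y k

/-- The vector of values at `x` of a vector `p` of polynomials. -/
def evalVec {κ σ R : Type*} [CommSemiring R] (p : κ → MvPolynomial σ R) (x : σ → R) : κ → R :=
  fun k => eval x (p k)

variable {n : ℕ}

lemma revPairing_comm (x y : Fin n → ℂ) : revPairing x y = revPairing y x :=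
  Fintype.sum_equiv Fin.revPerm _ _ fun k => by simp [mul_comm]

lemma conj_revPairing (x y : Fin n → ℂ) :
    conj (revPairing x y) = revPairing (star y) (star x) := by
  rw [revPairing_comm (star y)]
  simp [revPairing]

lemma revPairing_add_smul_left (x x' y : Fin n → ℂ) (w : ℂ) :
    revPairing (x + w • x') y = revPairing x y + w * revPairing x' y := by
  simp only [revPairing, Finset.mul_sum, ← Finset.sum_add_distrib, Pi.add_apply, Pi.smul_apply,
    smul_eq_mul, add_mul, mul_assoc]

lemma revPairing_add_smul_right (x y y' : Fin n → ℂ) (w : ℂ) :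
    revPairing x (y + w • y') = revPairing x y + w * revPairing x y' := by
  simp only [revPairing_comm x, revPairing_add_smul_left]

lemma revPairing_zero_left (y : Fin n → ℂ) : revPairing 0 y = 0 := by
  simp [revPairing]

lemma sum_mul_revPairing_pderiv {m : ℕ} (F : Fin m → MvPolynomial (Fin (m + 1)) ℂ)
    (p : Fin n → MvPolynomial (Fin m) ℂ) (y : Fin n → ℂ) (z : Fin m → ℂ) (w : ℂ) :
    ∑ j, eval (Fin.snoc z w) (F j) * revPairing (evalVec (fun k => pderiv j (p k)) z) y =
      revPairing (evalVec (fun k => fieldDeriv F (p k)) (Fin.snoc z w)) y := by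
  simp only [revPairing, evalVec, eval_snoc_fieldDeriv, Finset.mul_sum, Finset.sum_mul, mul_assoc]
  exact Finset.sum_comm

end RevPairing

section Polarization

lemma conj_eval {σ : Type*} (p : MvPolynomial σ ℂ) (x : σ → ℂ) :
    conj (eval x p) = eval (star x) (map conj p) :=
  (eval₂_comp _ _ _).trans (eval_map _ _ _).symm

lemma star_evalVec {κ σ : Type*} (p : κ → MvPolynomial σ ℂ) (x : σ → ℂ) :
    star (evalVec p x) = evalVec (fun k => map conj (p k)) (star x) :=
  funext fun k => conj_eval (p k) x

lemma star_snoc {n : ℕ} (z : Fin n → ℂ) (w : ℂ) :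
    star (Fin.snoc z w : Fin (n + 1) → ℂ) = Fin.snoc (star z) (conj w) :=
  Fin.comp_snoc star z w

section Differentiable

variable {E : Type*} [NormedAddCommGroup E] [NormedSpace ℂ E] {n : ℕ}

lemma differentiable_snoc {g : E → Fin n → ℂ} {f : E → ℂ} (hg : Differentiable ℂ g)
    (hf : Differentiable ℂ f) :
    Differentiable ℂ fun x => (Fin.snoc (g x) (f x) : Fin (n + 1) → ℂ) := by
  rw [differentiable_pi]
  intro i
  induction i using Fin.lastCases with
  | last => simpa using hf
  | cast i => simpa using differentiable_pi.1 hg i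

lemma differentiable_eval {σ : Type*} [Finite σ] (p : MvPolynomial σ ℂ) {g : E → σ → ℂ}
    (hg : Differentiable ℂ g) : Differentiable ℂ fun x => eval (g x) p := by
  have := Fintype.ofFinite σ
  simp only [eval_eq']
  fun_prop

lemma differentiable_evalVec {σ : Type*} [Finite σ] (p : Fin n → MvPolynomial σ ℂ)
    {g : E → σ → ℂ} (hg : Differentiable ℂ g) : Differentiable ℂ fun x => evalVec p (g x) :=
  differentiable_pi.2 fun k => differentiable_eval (p k) hg

lemma differentiable_revPairing {f g : E → Fin n → ℂ} (hf : Differentiable ℂ f)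
    (hg : Differentiable ℂ g) : Differentiable ℂ fun x => revPairing (f x) (g x) := by
  unfold revPairing
  fun_prop

end Differentiable

variable {n : ℕ} {p : Fin n → MvPolynomial (Fin 3) ℂ} {Qe : (Fin 3 → ℂ) → ℂ}
  {Qd : Fin 3 → (Fin 3 → ℂ) → ℂ} {F : Fin 3 → MvPolynomial (Fin 4) ℂ} {G : MvPolynomial (Fin 4) ℂ}

lemma IsInfCRF.eval_sub_eval_conj (h : IsInfCRF Qe Qd F G) (hp : ∀ k, map conj (p k) = p k)
    (hQe : ∀ z, Qe z = revPairing (evalVec p z) (evalVec p (star z)))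
    (hQd : ∀ j z, Qd j z = revPairing (evalVec (fun k => pderiv j (p k)) z) (evalVec p (star z)))
    (z : Fin 3 → ℂ) (u : ℝ) :
    eval (Fin.snoc z (u + I * Qe z)) G - eval (Fin.snoc (star z) (u - I * Qe z)) (map conj G) =
      2 * I *
        (revPairing (evalVec (fun k => fieldDeriv F (p k)) (Fin.snoc z (u + I * Qe z)))
            (evalVec p (star z)) +
          revPairing (evalVec p z) (evalVec (fun k => map conj (fieldDeriv F (p k)))
            (Fin.snoc (star z) (u - I * Qe z)))) := by
  have star_p (z : Fin 3 → ℂ) : star (evalVec p z) = evalVec p (star z) := by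
    simp only [star_evalVec, hp]
  have conj_w : conj ((u : ℂ) + I * Qe z) = u - I * Qe z := by
    have hreal : conj (Qe z) = Qe z := by
      rw [hQe, conj_revPairing, star_p, star_p, star_star]
    rw [map_add, map_mul, conj_I, conj_ofReal, hreal, neg_mul, sub_eq_add_neg]
  have hre := (add_conj _).trans (by rw [h z u, mul_zero, ofReal_zero])
  simp only [hQd, sum_mul_revPairing_pderiv] at hre
  rw [map_sub, map_div₀, map_mul, conj_I, map_ofNat, conj_revPairing, conj_eval, star_p, star_star,
    star_evalVec, star_snoc, conj_w] at hre
  field_simp at hre ⊢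
  linear_combination hre

lemma IsInfCRF.polarized (h : IsInfCRF Qe Qd F G) (hp : ∀ k, map conj (p k) = p k)
    (hQe : ∀ z, Qe z = revPairing (evalVec p z) (evalVec p (star z)))
    (hQd : ∀ j z, Qd j z = revPairing (evalVec (fun k => pderiv j (p k)) z) (evalVec p (star z)))
    {z ζ : Fin 3 → ℂ} {w w' : ℂ} (hw : w - w' = 2 * I * revPairing (evalVec p z) (evalVec p ζ)) :
    eval (Fin.snoc z w) G - eval (Fin.snoc ζ w') (map conj G) =
      2 * I * (revPairing (evalVec (fun k => fieldDeriv F (p k)) (Fin.snoc z w)) (evalVec p ζ) +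
        revPairing (evalVec p z)
          (evalVec (fun k => map conj (fieldDeriv F (p k))) (Fin.snoc ζ w'))) := by
  let ρ (x : (Fin 3 → ℂ) × (Fin 3 → ℂ) × ℂ) : ℂ := revPairing (evalVec p x.1) (evalVec p x.2.1)
  let x₁ (x : (Fin 3 → ℂ) × (Fin 3 → ℂ) × ℂ) : Fin 4 → ℂ := Fin.snoc x.1 (x.2.2 + I * ρ x)
  let x₂ (x : (Fin 3 → ℂ) × (Fin 3 → ℂ) × ℂ) : Fin 4 → ℂ := Fin.snoc x.2.1 (x.2.2 - I * ρ x)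
  let defect (x : (Fin 3 → ℂ) × (Fin 3 → ℂ) × ℂ) : ℂ :=
    eval (x₁ x) G - eval (x₂ x) (map conj G) -
      2 * I * (revPairing (evalVec (fun k => fieldDeriv F (p k)) (x₁ x)) (evalVec p x.2.1) +
        revPairing (evalVec p x.1) (evalVec (fun k => map conj (fieldDeriv F (p k))) (x₂ x)))
  have hz : Differentiable ℂ fun x : (Fin 3 → ℂ) × (Fin 3 → ℂ) × ℂ => evalVec p x.1 :=
    differentiable_evalVec p differentiable_fst
  have hζ : Differentiable ℂ fun x : (Fin 3 → ℂ) × (Fin 3 → ℂ) × ℂ => evalVec p x.2.1 :=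
    differentiable_evalVec p (differentiable_fst.comp differentiable_snd)
  have hρ : Differentiable ℂ ρ := differentiable_revPairing hz hζ
  have hx₁ : Differentiable ℂ x₁ := differentiable_snoc (by fun_prop) (by fun_prop)
  have hx₂ : Differentiable ℂ x₂ := differentiable_snoc (by fun_prop) (by fun_prop)
  have hdefect : Differentiable ℂ defect :=
    ((differentiable_eval G hx₁).sub (differentiable_eval _ hx₂)).sub <|
      ((differentiable_revPairing (differentiable_evalVec _ hx₁) hζ).add
        (differentiable_revPairing hz (differentiable_evalVec _ hx₂))).const_mul _
  have defect_eq_zero : defect = 0 := by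
    refine eq_zero_of_forall_star_ofReal hdefect fun z u => sub_eq_zero.2 ?_
    have := h.eval_sub_eval_conj hp hQe hQd z u
    rwa [hQe] at this
  have hw₁ : w = (w + w') / 2 + I * revPairing (evalVec p z) (evalVec p ζ) := by
    linear_combination hw / 2
  have hw₂ : w' = (w + w') / 2 - I * revPairing (evalVec p z) (evalVec p ζ) := by
    linear_combination -hw / 2
  have := sub_eq_zero.1 (congrFun defect_eq_zero (z, ζ, (w + w') / 2))
  simp only [x₁, x₂, ρ, ← hw₁, ← hw₂] at this
  exact this

lemma IsInfCRF.eval_eq_eval_zero (h : IsInfCRF Qe Qd F G) (hp : ∀ k, map conj (p k) = p k)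
    (hQe : ∀ z, Qe z = revPairing (evalVec p z) (evalVec p (star z)))
    (hQd : ∀ j z, Qd j z = revPairing (evalVec (fun k => pderiv j (p k)) z) (evalVec p (star z)))
    (hp₀ : evalVec p 0 = 0) (hFp₀ : ∀ w, evalVec (fun k => fieldDeriv F (p k)) (Fin.snoc 0 w) = 0)
    (z : Fin 3 → ℂ) (w : ℂ) :
    eval (Fin.snoc z w) G = eval (Fin.snoc 0 w) G ∧
      eval (Fin.snoc z w) (map conj G) = eval (Fin.snoc 0 w) G := by
  have hconj (ζ w) : eval (Fin.snoc ζ w) (map conj G) = eval (Fin.snoc 0 w) G := by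
    have hw : w - w = 2 * I * revPairing (evalVec p 0) (evalVec p ζ) := by
      rw [hp₀, revPairing_zero_left, mul_zero, sub_self]
    have := h.polarized hp hQe hQd hw
    rw [hFp₀, hp₀, revPairing_zero_left, revPairing_zero_left, add_zero, mul_zero] at this
    exact (sub_eq_zero.1 this).symm
  refine ⟨?_, hconj z w⟩
  calc
    eval (Fin.snoc z w) G = conj (eval (star (Fin.snoc z w)) (map conj G)) := by
      rw [← conj_eval, conj_conj]
    _ = conj (eval (star (Fin.snoc 0 w)) (map conj G)) := by
      rw [star_snoc, star_snoc, hconj, hconj]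
    _ = eval (Fin.snoc 0 w) G := by rw [← conj_eval, conj_conj]

end Polarization

section Graded

/-- `IsGraded δ r a` says that the `k`-th component of `a` is homogeneous of degree `δ * (k + r)`.
This is all that the comparison of bidegrees uses of the polynomials of the model. -/
def IsGraded {V : Type*} [SMul ℂ V] {n : ℕ} (δ r : ℕ) (a : V → Fin n → ℂ) : Prop :=
  ∀ (s : ℂ) (v : V) (k : Fin n), a (s • v) k = (s ^ δ) ^ ((k : ℕ) + r) * a v k

lemma IsGraded.map_zero {V : Type*} [Zero V] [SMulWithZero ℂ V] {n δ r : ℕ} {a : V → Fin n → ℂ}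
    (ha : IsGraded δ (r + 1) a) (hδ : δ ≠ 0) : a 0 = 0 := by
  ext k
  rw [← zero_smul ℂ (0 : V), ha, zero_pow hδ, zero_pow (by omega), zero_mul,
    Pi.zero_apply]

lemma eq_zero_of_forall_sum_pow_mul_eq_zero {n δ : ℕ} (hδ : δ ≠ 0) (r : ℕ) {a : Fin n → ℂ}
    (h : ∀ s : ℂ, ∑ i : Fin n, (s ^ δ) ^ ((i : ℕ) + r) * a i = 0) : a = 0 := by
  let node (j : Fin n) : ℂ := (((j : ℕ) + 1 : ℕ) : ℂ) ^ δ
  have node_injective : Function.Injective node := fun i j hij => by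
    simp only [node] at hij
    norm_cast at hij
    exact Fin.ext (Nat.succ_injective (Nat.pow_left_injective hδ hij))
  refine Matrix.eq_zero_of_forall_index_sum_pow_mul_eq_zero node_injective fun j => ?_
  have node_ne_zero : node j ^ r ≠ 0 :=
    pow_ne_zero _ (pow_ne_zero _ (Nat.cast_ne_zero.2 (Nat.succ_ne_zero _)))
  refine (mul_eq_zero_iff_left node_ne_zero).1 ?_
  rw [Finset.mul_sum, ← h ((j : ℕ) + 1 : ℕ)]
  refine Finset.sum_congr rfl fun i _ => ?_
  simp only [node]
  ring

lemma coeff_eq_of_forall_quadratic {c ρ a a' b b' : ℂ}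
    (h : ∀ w : ℂ, c * w ^ 2 - c * (w - 2 * I * ρ) ^ 2 =
      2 * I * ((a + w * b) + (a' + (w - 2 * I * ρ) * b'))) :
    b + b' = 2 * c * ρ ∧ I * (a + a') = ρ * (b - b') := by
  have hlin : b + b' = 2 * c * ρ := by
    refine mul_left_cancel₀ (mul_ne_zero two_ne_zero I_ne_zero) ?_
    linear_combination h 0 - h 1
  refine ⟨hlin, ?_⟩
  linear_combination -ρ * hlin - h 0 / 2 + 2 * ρ * (b' - c * ρ) * I_sq

variable {V : Type*} [SMul ℂ V] {n δ r : ℕ}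

lemma exists_eq_mul_of_revPairing_add {C : ℂ} {p η η' : V → Fin n → ℂ} (hδ : δ ≠ 0)
    (hp : IsGraded δ r p) (hη' : IsGraded δ r η') {e : V} (he : ∀ k, p e k ≠ 0)
    (h : ∀ z ζ, revPairing (η z) (p ζ) + revPairing (p z) (η' ζ) = C * revPairing (p z) (p ζ)) :
    ∃ α : Fin n → ℂ, (∀ z k, η z k.rev = α k * p z k.rev) ∧
      ∀ ζ k, η' ζ k = (C - α k) * p ζ k := by
  have term (z ζ k) : η z k.rev * p ζ k + p z k.rev * η' ζ k = C * (p z k.rev * p ζ k) := by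
    refine sub_eq_zero.1 (congrFun (eq_zero_of_forall_sum_pow_mul_eq_zero hδ r (a := fun k =>
      η z k.rev * p ζ k + p z k.rev * η' ζ k - C * (p z k.rev * p ζ k)) fun s => ?_) k)
    rw [← sub_eq_zero.2 (h z (s • ζ))]
    simp only [revPairing, Finset.mul_sum, ← Finset.sum_add_distrib, ← Finset.sum_sub_distrib,
      hp s ζ, hη' s ζ]
    exact Finset.sum_congr rfl fun k _ => by ring
  have hη (z k) : η z k.rev = (C - η' e k / p e k) * p z k.rev := by
    field_simp [he k]
    linear_combination term z e k
  refine ⟨fun k => C - η' e k / p e k, hη, fun ζ k => mul_left_cancel₀ (he k.rev) ?_⟩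
  linear_combination term e ζ k - p ζ k * hη e k

lemma coeff_eq_of_revPairing_add {μ : Fin 3 → ℂ} {p ξ ξ' : V → Fin 3 → ℂ} (hδ : δ ≠ 0)
    (hp : IsGraded δ 1 p) (hξ' : IsGraded δ 5 ξ')
    (h : ∀ z ζ, I * (revPairing (ξ z) (p ζ) + revPairing (p z) (ξ' ζ)) =
      revPairing (p z) (p ζ) * revPairing (p z) (μ * p ζ)) (z ζ : V) :
    I * ξ z 2 * p ζ 0 = 0 ∧ I * ξ z 1 * p ζ 1 = μ 0 * (p z 2 * p ζ 0) ^ 2 ∧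
      I * ξ z 0 * p ζ 2 = (μ 0 + μ 1) * (p z 2 * p ζ 0) * (p z 1 * p ζ 1) ∧
      μ 1 * (p z 1 * p ζ 1) ^ 2 + (μ 0 + μ 2) * (p z 2 * p ζ 0) * (p z 0 * p ζ 2) = 0 := by
  let x : Fin 3 → ℂ := fun k => p z k.rev * p ζ k
  let a : Fin 7 → ℂ := ![
    I * ξ z 2 * p ζ 0,
    I * ξ z 1 * p ζ 1 - μ 0 * x 0 ^ 2,
    I * ξ z 0 * p ζ 2 - (μ 0 + μ 1) * x 0 * x 1,
    -(μ 1 * x 1 ^ 2 + (μ 0 + μ 2) * x 0 * x 2),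
    I * p z 2 * ξ' ζ 0 - (μ 1 + μ 2) * x 1 * x 2,
    I * p z 1 * ξ' ζ 1 - μ 2 * x 2 ^ 2,
    I * p z 0 * ξ' ζ 2]
  have ha : a = 0 := by
    refine eq_zero_of_forall_sum_pow_mul_eq_zero hδ 1 fun s => ?_
    have hs := h z (s • ζ)
    simp only [revPairing, Pi.mul_apply, hp s ζ, hξ' s ζ, Fin.sum_univ_three] at hs
    simp only [Fin.rev_zero, Fin.reduceLast, Fin.reduceRev, Fin.coe_ofNat_eq_mod, Nat.reduceMod]
      at hs
    simp only [Fin.sum_univ_seven, Fin.rev_zero, Fin.reduceLast, Fin.reduceRev,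
      Fin.coe_ofNat_eq_mod, Nat.reduceMod, Matrix.cons_val, a, x]
    linear_combination hs
  have h₀ := congrFun ha 0
  have h₁ := congrFun ha 1
  have h₂ := congrFun ha 2
  have h₃ := congrFun ha 3
  exact ⟨h₀, sub_eq_zero.1 h₁, sub_eq_zero.1 h₂, neg_eq_zero.1 h₃⟩

lemma eq_zero_of_revPairing_add {μ : Fin 3 → ℂ} {p ξ ξ' : V → Fin 3 → ℂ} (hδ : δ ≠ 0)
    (hp : IsGraded δ 1 p) (hξ' : IsGraded δ 5 ξ') {e ζ₁ ζ₂ : V} (he : ∀ k, p e k ≠ 0)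
    (hζ₁ : p ζ₁ 0 ≠ 0 ∧ p ζ₁ 1 = 0) (hζ₂ : p ζ₂ 1 ≠ 0 ∧ p ζ₂ 2 = 0)
    (h : ∀ z ζ, I * (revPairing (ξ z) (p ζ) + revPairing (p z) (ξ' ζ)) =
      revPairing (p z) (p ζ) * revPairing (p z) (μ * p ζ)) :
    μ = 0 ∧ ξ = 0 := by
  have coeff_eq := coeff_eq_of_revPairing_add hδ hp hξ' h
  have hμ₀ : μ 0 = 0 := by
    obtain ⟨-, h₁, -⟩ := coeff_eq e ζ₁
    simpa [hζ₁, he] using h₁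
  have hμ₁ : μ 1 = 0 := by
    obtain ⟨-, -, -, h₃⟩ := coeff_eq e ζ₂
    simpa [hζ₂, he] using h₃
  have hμ₂ : μ 2 = 0 := by
    obtain ⟨-, -, -, h₃⟩ := coeff_eq e e
    simpa [hμ₀, hμ₁, he] using h₃
  refine ⟨funext fun k => by fin_cases k <;> assumption, funext fun z => funext fun k => ?_⟩
  obtain ⟨h₀, h₁, h₂, -⟩ := coeff_eq z e
  fin_cases k
  · simpa [hμ₀, hμ₁, he] using h₂
  · simpa [hμ₀, he] using h₁
  · simpa [he] using h₀

lemma eq_zero_and_eq_smul_of_forall_quadratic {c : ℂ} {p ξ η ξ' η' : V → Fin 3 → ℂ} (hδ : δ ≠ 0)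
    (hp : IsGraded δ 1 p) (hξ' : IsGraded δ 5 ξ') (hη' : IsGraded δ 1 η') {e ζ₁ ζ₂ : V}
    (he : ∀ k, p e k ≠ 0) (hζ₁ : p ζ₁ 0 ≠ 0 ∧ p ζ₁ 1 = 0) (hζ₂ : p ζ₂ 1 ≠ 0 ∧ p ζ₂ 2 = 0)
    (h : ∀ z ζ w, c * w ^ 2 - c * (w - 2 * I * revPairing (p z) (p ζ)) ^ 2 =
      2 * I * ((revPairing (ξ z) (p ζ) + w * revPairing (η z) (p ζ)) +
        (revPairing (p z) (ξ' ζ) +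
          (w - 2 * I * revPairing (p z) (p ζ)) * revPairing (p z) (η' ζ)))) (z : V) :
    ξ z = 0 ∧ η z = c • p z := by
  have hcoeff (z ζ) := coeff_eq_of_forall_quadratic (h z ζ)
  obtain ⟨α, hη, hη'_eq⟩ := exists_eq_mul_of_revPairing_add hδ hp hη' he fun z ζ => (hcoeff z ζ).1
  let μ : Fin 3 → ℂ := fun k => 2 * (α k - c)
  have hμ (z ζ) : revPairing (η z) (p ζ) - revPairing (p z) (η' ζ) =
      revPairing (p z) (μ * p ζ) := by
    simp only [revPairing, hη, hη'_eq, ← Finset.sum_sub_distrib, μ, Pi.mul_apply]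
    exact Finset.sum_congr rfl fun k _ => by ring
  obtain ⟨hμ₀, rfl⟩ := eq_zero_of_revPairing_add hδ hp hξ' he hζ₁ hζ₂ fun z ζ => by
    rw [← hμ, (hcoeff z ζ).2]
  refine ⟨rfl, funext fun k => ?_⟩
  have hα : α k.rev = c := by simpa [μ, sub_eq_zero] using congrFun hμ₀ k.rev
  simpa [hα] using hη z k.rev

end Graded

section Model

lemma isGraded_evalVec {n m δ r : ℕ} {q : Fin n → MvPolynomial (Fin m) ℂ}
    (hq : ∀ k : Fin n, (q k).IsHomogeneous (δ * (k + r))) : IsGraded δ r (evalVec q) :=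
  fun s z k => by rw [evalVec, eval_smul_of_isHomogeneous (hq k), pow_mul, evalVec]

lemma exists_evalVec_snoc_eq_add_smul {q : Fin 3 → MvPolynomial (Fin 4) ℂ}
    (hq : ∀ k : Fin 3, (q k).IsWeightedHomogeneous (Fin.snoc (fun _ => 1) 8 : Fin 4 → ℕ)
      (2 * (k + 5))) :
    ∃ ξ η : (Fin 3 → ℂ) → Fin 3 → ℂ, IsGraded 2 5 ξ ∧ IsGraded 2 1 η ∧
      ∀ z w, evalVec q (Fin.snoc z w) = ξ z + w • η z := by
  choose f hf hq_eval using fun k => exists_eval_snoc_eq_sum (by norm_num) (hq k)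
  refine ⟨evalVec fun k => f k 0, evalVec fun k => f k 1, isGraded_evalVec fun k => hf k 0,
    isGraded_evalVec fun k => by simpa [mul_add] using hf k 1, fun z w => funext fun k => ?_⟩
  have hdiv : 2 * ((k : ℕ) + 5) / 8 + 1 = 2 := by omega
  simp [evalVec, hq_eval, hdiv, Finset.sum_range_succ, mul_comm]

/-- The polynomials `p₀, p₁, p₂`, of degrees `2, 4, 6`, for which the model is
`Q(z, z̄) = p₂(z) p₀(z̄) + p₁(z) p₁(z̄) + p₀(z) p₂(z̄)`. -/
def modelPoly : Fin 3 → MvPolynomial (Fin 3) ℂ :=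
  ![X 0 ^ 2, X 0 ^ 2 * X 1 ^ 2, X 0 ^ 2 * X 1 * X 2 ^ 3 + X 0 * X 1 ^ 4 * X 2]

lemma isHomogeneous_modelPoly (k : Fin 3) : (modelPoly k).IsHomogeneous (2 * (k + 1)) := by
  have hX (i : Fin 3) : (X i : MvPolynomial (Fin 3) ℂ).IsHomogeneous 1 := isHomogeneous_X ℂ i
  fin_cases k
  · exact (hX 0).pow 2
  · exact ((hX 0).pow 2).mul ((hX 1).pow 2)
  · exact ((((hX 0).pow 2).mul (hX 1)).mul ((hX 2).pow 3)).add
      (((hX 0).mul ((hX 1).pow 4)).mul (hX 2))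

lemma map_conj_modelPoly (k : Fin 3) : map conj (modelPoly k) = modelPoly k := by
  fin_cases k <;> simp [modelPoly]

lemma pderiv_modelPoly (j k : Fin 3) :
    pderiv j (modelPoly k) =
      !![2 * X 0, 0, 0;
        2 * X 0 * X 1 ^ 2, 2 * X 0 ^ 2 * X 1, 0;
        2 * X 0 * X 1 * X 2 ^ 3 + X 1 ^ 4 * X 2, X 0 ^ 2 * X 2 ^ 3 + 4 * X 0 * X 1 ^ 3 * X 2,
          3 * X 0 ^ 2 * X 1 * X 2 ^ 2 + X 0 * X 1 ^ 4] k j := by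
  fin_cases j <;> fin_cases k <;> simp [modelPoly, pderiv_X] <;> ring

lemma Qe4_eq_revPairing (z : Fin 3 → ℂ) :
    Qe4 z = revPairing (evalVec modelPoly z) (evalVec modelPoly (star z)) := by
  simp only [Qe4, cc, revPairing, evalVec, modelPoly, Fin.sum_univ_three, Fin.rev_zero,
    Fin.reduceLast, Fin.reduceRev, Matrix.cons_val, map_add, map_mul, map_pow, eval_X,
    Pi.star_apply, RCLike.star_def]
  ring

lemma Qd4_eq_revPairing (j : Fin 3) (z : Fin 3 → ℂ) :
    Qd4 j z =
      revPairing (evalVec (fun k => pderiv j (modelPoly k)) z) (evalVec modelPoly (star z)) := by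
  simp only [revPairing, evalVec, pderiv_modelPoly, Fin.sum_univ_three, Fin.rev_zero,
    Fin.reduceLast, Fin.reduceRev]
  fin_cases j <;>
    simp only [Qd4, cc, modelPoly, Fin.zero_eta, Fin.mk_one, Fin.reduceFinMk, Matrix.of_apply,
      Matrix.cons_val, map_zero, map_add, map_mul, map_pow, eval_X, eval_ofNat, Pi.star_apply,
      RCLike.star_def] <;>
    ring

lemma isWeightedHomogeneous_snoc_of_forall_support {p : MvPolynomial (Fin 4) ℂ} {n : ℕ}
    (hp : ∀ m ∈ p.support, ((m 0 : ℚ) + m 1 + m 2) / 8 + m 3 = n / 8) :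
    p.IsWeightedHomogeneous (Fin.snoc (fun _ => 1) 8 : Fin 4 → ℕ) n := by
  intro m hm
  rw [Finsupp.weight_eq_sum, Fin.sum_univ_castSucc, Fin.snoc_last, Fin.sum_univ_three]
  simp only [Fin.snoc_castSucc, smul_eq_mul, mul_one]
  have hweight := hp m (mem_support_iff.2 hm)
  field_simp at hweight
  rw [mul_comm (m _)]
  exact_mod_cast hweight

variable {F : Fin 3 → MvPolynomial (Fin 4) ℂ} {G : MvPolynomial (Fin 4) ℂ}

lemma IsInfCRF.exists_evalVec_fieldDeriv_eq_smul (h : IsInfCRF Qe4 Qd4 F G)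
    (hF : ∀ j, (F j).IsWeightedHomogeneous (Fin.snoc (fun _ => 1) 8 : Fin 4 → ℕ) 9)
    (hG : G.IsWeightedHomogeneous (Fin.snoc (fun _ => 1) 8 : Fin 4 → ℕ) (8 * 2)) :
    ∃ c : ℂ, ∀ z w, eval (Fin.snoc z w) G = c * w ^ 2 ∧
      evalVec (fun k => fieldDeriv F (modelPoly k)) (Fin.snoc z w) =
        (c * w) • evalVec modelPoly z := by
  have hFp (k : Fin 3) : (fieldDeriv F (modelPoly k)).IsWeightedHomogeneous
      (Fin.snoc (fun _ => 1) 8 : Fin 4 → ℕ) (2 * (k + 5)) := by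
    convert isWeightedHomogeneous_fieldDeriv hF (isHomogeneous_modelPoly k) using 1
    omega
  obtain ⟨ξ, η, hξ, hη, hFp_eval⟩ := exists_evalVec_snoc_eq_add_smul hFp
  obtain ⟨ξ', η', hξ', hη', hFp'_eval⟩ :=
    exists_evalVec_snoc_eq_add_smul fun k => isWeightedHomogeneous_map conj (hFp k)
  have hp : IsGraded 2 1 (evalVec modelPoly) := isGraded_evalVec isHomogeneous_modelPoly
  have hFp₀ (w) : evalVec (fun k => fieldDeriv F (modelPoly k)) (Fin.snoc 0 w) = 0 := by
    rw [hFp_eval, hξ.map_zero two_ne_zero, hη.map_zero two_ne_zero, smul_zero, add_zero]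
  have hG₀ := h.eval_eq_eval_zero map_conj_modelPoly Qe4_eq_revPairing Qd4_eq_revPairing
    (hp.map_zero two_ne_zero) hFp₀
  obtain ⟨c, hc⟩ := exists_eval_snoc_zero_eq_mul_pow (by norm_num) hG
  refine ⟨c, fun z w => ⟨(hG₀ z w).1.trans (hc w), ?_⟩⟩
  have hcore := eq_zero_and_eq_smul_of_forall_quadratic two_ne_zero hp hξ' hη'
    (e := 1) (ζ₁ := ![1, 0, 0]) (ζ₂ := ![1, 1, 0])
    (fun k => by fin_cases k <;> simp [evalVec, modelPoly])
    (by simp [evalVec, modelPoly]) (by simp [evalVec, modelPoly])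
    fun z ζ w => by
      rw [← revPairing_add_smul_left, ← revPairing_add_smul_right, ← hFp_eval, ← hFp'_eval,
        ← h.polarized map_conj_modelPoly Qe4_eq_revPairing Qd4_eq_revPairing (by ring),
        (hG₀ _ _).1, (hG₀ _ _).2, hc, hc]
  rw [hFp_eval, (hcore z).1, (hcore z).2, zero_add, smul_smul, mul_comm]

-- The base point is a zero of `∂p₂/∂z₂`, so `v 2` drops out.
lemma eq_zero_of_sum_mul_pderiv_modelPoly_eq {c : ℂ} {v : Fin 3 → ℂ}
    (h : ∀ k, ∑ j, v j * eval ![-1 / 3, 1, 1] (pderiv j (modelPoly k)) =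
      c * eval ![-1 / 3, 1, 1] (modelPoly k)) : c = 0 := by
  simp only [pderiv_modelPoly] at h
  have h₀ : v 0 * (2 * (-1 / 3)) = c * (-1 / 3) ^ 2 := by
    simpa [modelPoly, Fin.sum_univ_three] using h 0
  have h₁ : v 0 * (2 * (-1 / 3)) + v 1 * (2 * (-1 / 3) ^ 2) = c * (-1 / 3) ^ 2 := by
    simpa [modelPoly, Fin.sum_univ_three] using h 1
  have h₂ : v 0 * (2 * (-1 / 3) + 1) + v 1 * ((-1 / 3) ^ 2 + 4 * (-1 / 3)) +
      v 2 * (3 * (-1 / 3) ^ 2 + -1 / 3) = c * ((-1 / 3) ^ 2 + -1 / 3) := by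
    simpa [modelPoly, Fin.sum_univ_three] using h 2
  linear_combination -30 * h₀ + 33 * h₁ + 6 * h₂

lemma IsInfCRF.eq_zero_and_fieldDeriv_eq_zero (h : IsInfCRF Qe4 Qd4 F G)
    (hF : ∀ j, (F j).IsWeightedHomogeneous (Fin.snoc (fun _ => 1) 8 : Fin 4 → ℕ) 9)
    (hG : G.IsWeightedHomogeneous (Fin.snoc (fun _ => 1) 8 : Fin 4 → ℕ) (8 * 2)) :
    G = 0 ∧ ∀ k, fieldDeriv F (modelPoly k) = 0 := by
  obtain ⟨c, hc⟩ := h.exists_evalVec_fieldDeriv_eq_smul hF hG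
  have hc₀ : c = 0 := by
    refine eq_zero_of_sum_mul_pderiv_modelPoly_eq
      (v := fun j => eval (Fin.snoc ![-1 / 3, 1, 1] 1) (F j)) fun k => ?_
    rw [← eval_snoc_fieldDeriv F _ _ 1]
    simpa [evalVec] using congrFun (hc ![-1 / 3, 1, 1] 1).2 k
  simp only [hc₀, zero_mul, zero_smul] at hc
  refine ⟨MvPolynomial.funext fun x => ?_, fun k => MvPolynomial.funext fun x => ?_⟩
  · rw [← Fin.snoc_init_self x, map_zero]
    exact (hc _ _).1
  · rw [← Fin.snoc_init_self x, map_zero]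
    exact congrFun (hc _ _).2 k

lemma det_pderiv_modelPoly_ne_zero :
    (Matrix.of fun k j => pderiv j (modelPoly k)).det ≠ 0 := by
  intro hdet
  have heval : (2 * 2 * (3 + 1) : ℂ) = 0 := by
    simpa [Matrix.det_fin_three, pderiv_modelPoly] using congrArg (eval 1) hdet
  norm_num at heval

end Model

section Rotation

lemma isRotF_Qd4 : IsRotF Qd4 (Matrix.diagonal ![11 * I, 3 * I, -I]) := by
  intro z
  have hreal : conj (Qe4 z) = Qe4 z := by
    simp only [Qe4, cc, map_add, map_mul, map_pow, conj_conj]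
    ring
  have hsum : ∑ j, (∑ k, Matrix.diagonal ![11 * I, 3 * I, -I] j k * z k) * Qd4 j z =
      I * (22 * (Qe4 z).re + 6 * ‖z 0 ^ 2 * z 1 ^ 2‖ ^ 2 : ℝ) := by
    push_cast
    rw [conj_eq_iff_re.1 hreal, ← conj_mul']
    simp only [Matrix.diagonal_apply, ite_mul, zero_mul, Finset.sum_ite_eq, Finset.mem_univ,
      if_true, Fin.sum_univ_three, Matrix.cons_val, Qe4, Qd4, cc, map_mul, map_pow]
    ring
  rw [hsum, I_mul_re, ofReal_im, neg_zero]

lemma imDiag_diagonal {v : Fin 3 → ℂ} (hv : ∀ j, (v j).re = 0) : ImDiag (Matrix.diagonal v) :=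
  ⟨1, v, isUnit_one, by rw [mul_one, one_mul], hv⟩

end Rotation

/-- For the hypersurface `Im w = Qe4(z,z̄)` in `ℂ⁴`:
(1) `X = 11i z₁∂_{z₁} + 3i z₂∂_{z₂} - i z₃∂_{z₃}` is a (nonzero imaginary diagonal)
rotation, and (2) `g₁ = {0}`. -/
theorem stmt4 :
    (IsRotF Qd4 (Matrix.diagonal ![11 * Complex.I, 3 * Complex.I, -Complex.I]) ∧
      Matrix.diagonal ![11 * Complex.I, 3 * Complex.I, -Complex.I] ≠ 0 ∧
      ImDiag (Matrix.diagonal ![11 * Complex.I, 3 * Complex.I, -Complex.I])) ∧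
    (∀ (F : Fin 3 → MvPolynomial (Fin 4) ℂ) (G : MvPolynomial (Fin 4) ℂ),
      IsInfCRF Qe4 Qd4 F G →
      (∀ j, ∀ m ∈ (F j).support, wZ m = 1) →
      (∀ m ∈ G.support, wW m = 1) →
      (∀ j, F j = 0) ∧ G = 0) := by
  refine ⟨⟨isRotF_Qd4, fun h => ?_, imDiag_diagonal fun j => by fin_cases j <;> simp⟩,
    fun F G h hF hG => ?_⟩
  · simpa using congrFun (Matrix.diagonal_eq_zero.1 h) 2
  · have hF' (j) : (F j).IsWeightedHomogeneous (Fin.snoc (fun _ => 1) 8 : Fin 4 → ℕ) 9 :=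
      isWeightedHomogeneous_snoc_of_forall_support fun m hm => by
        linear_combination (norm := (rw [wZ]; push_cast; ring)) hF j m hm
    have hG' : G.IsWeightedHomogeneous (Fin.snoc (fun _ => 1) 8 : Fin 4 → ℕ) (8 * 2) :=
      isWeightedHomogeneous_snoc_of_forall_support fun m hm => by
        linear_combination (norm := (rw [wW]; push_cast; ring)) hG m hm
    obtain ⟨hG₀, hFp⟩ := h.eq_zero_and_fieldDeriv_eq_zero hF' hG'
    exact ⟨congrFun (eq_zero_of_fieldDeriv_eq_zero det_pderiv_modelPoly_ne_zero hFp), hG₀⟩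
end
end

section
/- Let P = c_P z₁^{α₁}z₂^{α₂}z₃^{α₃}, Q = c_Q z₁^{β₁}z₂^{β₂}z₃^{β₃}, R = c_R z₁^{γ₁}z₂^{γ₂}z₃^{γ₃} be monomials with nonzero coefficients c_P, c_Q, c_R ∈ ℂ and deg P + deg Q = 2·deg R, let Φ(z) = P(z)·conj(Q(z)) + Q(z)·conj(P(z)) + R(z)·conj(R(z)) and M = {(z,w) ∈ ℂ³×ℂ : Im w = Φ(z)}. Then M is holomorphically nondegenerate if and only if the determinant of the 3×3 matrix whose columns are (α₁,α₂,α₃), (β₁,β₂,β₃), (γ₁,γ₂,γ₃) is nonzero. -/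
/-!
Polarization, i.e. treating `z` and `conj z` as independent variables, separates the tangency
equation into conditions on the vector field alone. If `1, P, Q, R` are linearly independent,
these say that `G = 0` and that `∑ j, F j ∂/∂z_j` annihilates `P`, `Q` and `R`. A nonzero field
annihilating `P`, `Q`, `R` exists iff their Jacobian determinant vanishes, and a nonvanishing
Jacobian determinant already forces the linear independence. So for arbitrary polynomials `M` is
holomorphically nondegenerate iff the Jacobian determinant of `P, Q, R` is nonzero. For monomials,
Euler's relation `z_j ∂(z^e)/∂z_j = e_j z^e` makes that determinant, multiplied by `z₁z₂z₃`, equal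
to `det(exponents) · P · Q · R`.
-/

open MvPolynomial Complex

noncomputable section

/-- `Φ(z) = P(z)·conj(Q(z)) + Q(z)·conj(P(z)) + R(z)·conj(R(z))`, so that the model
hypersurface is `M = {(z,w) : Im w = Φ(z)}`. -/
def Phi (P Q R : MvPolynomial (Fin 3) ℂ) (z : Fin 3 → ℂ) : ℂ :=
  eval z P * (starRingEnd ℂ) (eval z Q) + eval z Q * (starRingEnd ℂ) (eval z P) +
    eval z R * (starRingEnd ℂ) (eval z R)

/-- `Φ_j(z) = (∂P/∂z_j)(z)·conj(Q(z)) + (∂Q/∂z_j)(z)·conj(P(z)) + (∂R/∂z_j)(z)·conj(R(z))`. -/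
def PhiD (P Q R : MvPolynomial (Fin 3) ℂ) (j : Fin 3) (z : Fin 3 → ℂ) : ℂ :=
  eval z (pderiv j P) * (starRingEnd ℂ) (eval z Q) +
    eval z (pderiv j Q) * (starRingEnd ℂ) (eval z P) +
    eval z (pderiv j R) * (starRingEnd ℂ) (eval z R)

/-- The polynomial vector field `Σ F_j(z,w) ∂/∂z_j + G(z,w) ∂/∂w` (variables
`0,1,2` are `z₁,z₂,z₃` and variable `3` is `w`) is holomorphic tangent to `M`. -/
def HoloTangent (P Q R : MvPolynomial (Fin 3) ℂ)
    (F : Fin 3 → MvPolynomial (Fin 4) ℂ) (G : MvPolynomial (Fin 4) ℂ) : Prop :=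
  ∀ (z : Fin 3 → ℂ) (u : ℝ),
    eval (Fin.snoc z ((u : ℂ) + Complex.I * Phi P Q R z)) G / (2 * Complex.I) -
      ∑ j, eval (Fin.snoc z ((u : ℂ) + Complex.I * Phi P Q R z)) (F j) * PhiD P Q R j z = 0

/-- `M` is holomorphically nondegenerate. -/
def HoloNondeg (P Q R : MvPolynomial (Fin 3) ℂ) : Prop :=
  ∀ (F : Fin 3 → MvPolynomial (Fin 4) ℂ) (G : MvPolynomial (Fin 4) ℂ),
    HoloTangent P Q R F G → (∀ j, F j = 0) ∧ G = 0

/-- The monomial `c·z₁^{e₁} z₂^{e₂} z₃^{e₃}`. -/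
def mon (c : ℂ) (e : Fin 3 → ℕ) : MvPolynomial (Fin 3) ℂ :=
  C c * X 0 ^ e 0 * X 1 ^ e 1 * X 2 ^ e 2

/-- Total degree of the exponent vector `e`. -/
def degE (e : Fin 3 → ℕ) : ℕ := e 0 + e 1 + e 2

/-- The determinant of the 3×3 matrix whose columns are the exponent vectors
`a`, `b`, `g` of the three monomials. -/
def edet (a b g : Fin 3 → ℕ) : ℤ :=
  Matrix.det !![(a 0 : ℤ), (b 0 : ℤ), (g 0 : ℤ);
                (a 1 : ℤ), (b 1 : ℤ), (g 1 : ℤ);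
                (a 2 : ℤ), (b 2 : ℤ), (g 2 : ℤ)]

open ComplexConjugate

section Vanishing

lemma eval_snoc_eq_zero_of_infinite {R : Type*} [CommRing R] [IsDomain R] {n : ℕ}
    {p : MvPolynomial (Fin (n + 1)) R} {z : Fin n → R} {s : Set R} (hs : s.Infinite)
    (h : ∀ w ∈ s, eval (Fin.snoc z w : Fin (n + 1) → R) p = 0) (w : R) :
    eval (Fin.snoc z w : Fin (n + 1) → R) p = 0 := by
  let q : Polynomial R :=
    eval₂ Polynomial.C (Fin.snoc (α := fun _ => Polynomial R) (Polynomial.C ∘ z) Polynomial.X) p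
  have eval_q (t : R) : q.eval t = eval (Fin.snoc z t : Fin (n + 1) → R) p := by
    rw [polynomial_eval_eval₂, ← eval₂_id]
    congr 1
    · ext; simp
    · funext i
      cases i using Fin.lastCases <;> simp
  have q_eq_zero : q = 0 :=
    q.eq_zero_of_infinite_isRoot (hs.mono fun t ht => (eval_q t).trans (h t ht))
  rw [← eval_q, q_eq_zero, Polynomial.eval_zero]

variable {σ : Type*}

lemma eq_zero_of_eval_conj_eq_zero {p : MvPolynomial (σ ⊕ σ) ℂ}
    (h : ∀ z : σ → ℂ, eval (Sum.elim z (conj ∘ z)) p = 0) : p = 0 := by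
  -- `q(s, t) = p(s + it, s - it)`; for real `s, t` the two arguments are conjugate to each other.
  let q : MvPolynomial (σ ⊕ σ) ℂ :=
    bind₁ (Sum.elim (fun j => X (Sum.inl j) + C I * X (Sum.inr j))
      (fun j => X (Sum.inl j) - C I * X (Sum.inr j))) p
  have eval_q (s t : σ → ℂ) :
      eval (Sum.elim s t) q = eval (Sum.elim (s + I • t) (s - I • t)) p := by
    rw [← aeval_eq_eval, ← aeval_eq_eval, aeval_bind₁]
    congr 2
    funext i
    cases i <;> simp
  have q_eq_zero : q = 0 := by
    refine funext_set (fun _ => Set.range ((↑) : ℝ → ℂ))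
      (fun _ => Set.infinite_range_of_injective ofReal_injective) fun x hx => ?_
    choose r hr using fun i => hx i trivial
    rw [map_zero, ← Sum.elim_comp_inl_inr x, eval_q, ← h]
    congr 3
    funext j
    simp [← hr, sub_eq_add_neg]
  refine MvPolynomial.funext fun x => ?_
  let ζ := x ∘ Sum.inl
  let η := x ∘ Sum.inr
  have I_mul_inv : I * (2 * I)⁻¹ = 2⁻¹ := by field_simp
  have left_eq : (2⁻¹ : ℂ) • (ζ + η) + I • (2 * I)⁻¹ • (ζ - η) = ζ := by
    rw [smul_smul, I_mul_inv]
    module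
  have right_eq : (2⁻¹ : ℂ) • (ζ + η) - I • (2 * I)⁻¹ • (ζ - η) = η := by
    rw [smul_smul, I_mul_inv]
    module
  have hx := eval_q ((2⁻¹ : ℂ) • (ζ + η)) ((2 * I)⁻¹ • (ζ - η))
  rw [q_eq_zero, left_eq, right_eq, Sum.elim_comp_inl_inr] at hx
  exact hx.symm

lemma eq_zero_of_sum_mul_conj_eq_zero {ι : Type*} [Fintype ι] {f A : ι → MvPolynomial σ ℂ}
    (hf : LinearIndependent ℂ f) (h : ∀ z, ∑ i, eval z (A i) * conj (eval z (f i)) = 0) :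
    A = 0 := by
  let p : MvPolynomial (σ ⊕ σ) ℂ :=
    ∑ i, rename Sum.inl (A i) * rename Sum.inr (map conj (f i))
  have eval_p (z ζ : σ → ℂ) :
      eval (Sum.elim z (conj ∘ ζ)) p = ∑ i, eval z (A i) * conj (eval ζ (f i)) := by
    simp [p, eval_rename, map_eval]
  have p_eq_zero : p = 0 := eq_zero_of_eval_conj_eq_zero fun z => (eval_p z z).trans (h z)
  have relation (z : σ → ℂ) : ∑ i, conj (eval z (A i)) • f i = 0 := by
    refine MvPolynomial.funext fun ζ => (starRingEnd ℂ).injective ?_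
    simpa [smul_eval, p_eq_zero] using (eval_p z ζ).symm
  funext i
  refine MvPolynomial.funext fun z => ?_
  simpa using Fintype.linearIndependent_iff.1 hf _ (relation z) i

end Vanishing

section Jacobian

/-- The Jacobian matrix of a family of polynomials. Rows are indexed by the variables and columns by
the members of the family, as in `edet`. -/
def jacobianMatrix {R σ ι : Type*} [CommSemiring R] (f : ι → MvPolynomial σ R) :
    Matrix σ ι (MvPolynomial σ R) :=
  Matrix.of fun j i => pderiv j (f i)

/-- The derivative of `p(z)` along the vector field `∑ j, F j ∂/∂z_j`, whose coefficients may depend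
on the variables `z` and on one further, last variable `w`. -/
def derivAlong {R : Type*} [CommSemiring R] {n : ℕ} (F : Fin n → MvPolynomial (Fin (n + 1)) R)
    (p : MvPolynomial (Fin n) R) : MvPolynomial (Fin (n + 1)) R :=
  ∑ j, F j * rename Fin.castSucc (pderiv j p)

lemma eval_snoc_derivAlong {R : Type*} [CommSemiring R] {n : ℕ}
    (F : Fin n → MvPolynomial (Fin (n + 1)) R) (p : MvPolynomial (Fin n) R) (z : Fin n → R)
    (w : R) :
    eval (Fin.snoc z w : Fin (n + 1) → R) (derivAlong F p) =
      ∑ j, eval (Fin.snoc z w : Fin (n + 1) → R) (F j) * eval z (pderiv j p) := by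
  simp [derivAlong, eval_rename]

variable {R : Type*} [CommRing R] [IsDomain R] {n : ℕ}

lemma exists_derivAlong_eq_zero_iff {f : Fin n → MvPolynomial (Fin n) R} :
    (∃ F : Fin n → MvPolynomial (Fin (n + 1)) R, F ≠ 0 ∧ ∀ i, derivAlong F (f i) = 0) ↔
      (jacobianMatrix f).det = 0 := by
  let lift := (rename (R := R) (Fin.castSucc : Fin n → Fin (n + 1))).toRingHom
  have vecMul_lift (F : Fin n → MvPolynomial (Fin (n + 1)) R) :
      Matrix.vecMul F (lift.mapMatrix (jacobianMatrix f)) = fun i => derivAlong F (f i) := rfl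
  have lift_injective : Function.Injective lift := rename_injective _ (Fin.castSucc_injective n)
  rw [← map_eq_zero_iff lift lift_injective, RingHom.map_det, ← Matrix.exists_vecMul_eq_zero_iff]
  simp only [vecMul_lift, funext_iff, Pi.zero_apply]

lemma linearIndependent_cons_one_of_det_jacobianMatrix_ne_zero
    {f : Fin n → MvPolynomial (Fin n) R} (hf : (jacobianMatrix f).det ≠ 0) :
    LinearIndependent R (Fin.cons 1 f : Fin (n + 1) → MvPolynomial (Fin n) R) := by
  refine Fintype.linearIndependent_iff.2 fun c hc => ?_
  simp only [Fin.sum_univ_succ, Fin.cons_zero, Fin.cons_succ] at hc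
  have mulVec_eq_zero : (jacobianMatrix f).mulVec (fun i => C (c i.succ)) = 0 := by
    funext j
    simpa [jacobianMatrix, Matrix.mulVec, dotProduct, smul_eq_C_mul, mul_comm] using
      congrArg (pderiv j) hc
  have c_succ (i : Fin n) : c i.succ = 0 :=
    (C_eq_zero (σ := Fin n)).1 (congrFun (Matrix.eq_zero_of_mulVec_eq_zero hf mulVec_eq_zero) i)
  have c_zero : c 0 = 0 := by simpa [c_succ, smul_eq_C_mul] using hc
  exact Fin.cases c_zero c_succ

end Jacobian

section Tangency

variable {P Q R : MvPolynomial (Fin 3) ℂ} {F : Fin 3 → MvPolynomial (Fin 4) ℂ}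
  {G : MvPolynomial (Fin 4) ℂ}

lemma sum_mul_PhiD (z : Fin 3 → ℂ) (w : ℂ) :
    ∑ j, eval (Fin.snoc z w : Fin 4 → ℂ) (F j) * PhiD P Q R j z =
      eval (Fin.snoc z w : Fin 4 → ℂ) (derivAlong F P) * conj (eval z Q) +
        eval (Fin.snoc z w : Fin 4 → ℂ) (derivAlong F Q) * conj (eval z P) +
        eval (Fin.snoc z w : Fin 4 → ℂ) (derivAlong F R) * conj (eval z R) := by
  simp only [eval_snoc_derivAlong, PhiD, Finset.sum_mul, ← Finset.sum_add_distrib, mul_add,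
    mul_assoc]

lemma holoTangent_of_derivAlong_eq_zero (hP : derivAlong F P = 0) (hQ : derivAlong F Q = 0)
    (hR : derivAlong F R = 0) : HoloTangent P Q R F 0 := fun z u => by
  simp [sum_mul_PhiD, hP, hQ, hR]

/-- For fixed `z` the equation is polynomial in `w`, and `M` provides a whole line of values `w`. -/
lemma HoloTangent.eval_div_eq_sum (h : HoloTangent P Q R F G) (z : Fin 3 → ℂ) (w : ℂ) :
    eval (Fin.snoc z w : Fin 4 → ℂ) G / (2 * I) =
      ∑ j, eval (Fin.snoc z w : Fin 4 → ℂ) (F j) * PhiD P Q R j z := by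
  let D : MvPolynomial (Fin 4) ℂ := G * C (2 * I)⁻¹ - ∑ j, F j * C (PhiD P Q R j z)
  have eval_D (t : ℂ) : eval (Fin.snoc z t : Fin 4 → ℂ) D =
      eval (Fin.snoc z t : Fin 4 → ℂ) G / (2 * I) -
        ∑ j, eval (Fin.snoc z t : Fin 4 → ℂ) (F j) * PhiD P Q R j z := by
    simp only [D, map_sub, map_sum, map_mul, eval_C, div_eq_mul_inv]
  have line_infinite : (Set.range fun u : ℝ => (u : ℂ) + I * Phi P Q R z).Infinite :=
    Set.infinite_range_of_injective ((add_left_injective _).comp ofReal_injective)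
  rw [← sub_eq_zero, ← eval_D]
  refine eval_snoc_eq_zero_of_infinite line_infinite ?_ w
  rintro _ ⟨u, rfl⟩
  exact (eval_D _).trans (h z u)

lemma HoloTangent.eq_zero_of_linearIndependent (hind : LinearIndependent ℂ ![1, P, Q, R])
    (h : HoloTangent P Q R F G) :
    G = 0 ∧ derivAlong F P = 0 ∧ derivAlong F Q = 0 ∧ derivAlong F R = 0 := by
  let lift := rename (R := ℂ) (Fin.castSucc : Fin 3 → Fin 4)
  have lift_ker : LinearMap.ker lift.toLinearMap = ⊥ :=
    LinearMap.ker_eq_bot.2 (rename_injective _ (Fin.castSucc_injective 3))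
  let A : Fin 4 → MvPolynomial (Fin 4) ℂ :=
    ![C (2 * I)⁻¹ * G, -derivAlong F Q, -derivAlong F P, -derivAlong F R]
  have A_eq_zero : A = 0 := by
    refine eq_zero_of_sum_mul_conj_eq_zero (hind.map' lift.toLinearMap lift_ker) fun x => ?_
    have hx := h.eval_div_eq_sum (Fin.init x) (x (Fin.last 3))
    rw [sum_mul_PhiD, Fin.snoc_init_self, div_eq_inv_mul] at hx
    have eval_lift (p : MvPolynomial (Fin 3) ℂ) : eval x (lift p) = eval (Fin.init x) p :=
      eval_rename _ _ _
    simp only [Fin.sum_univ_four, A, Function.comp_apply, AlgHom.coe_toLinearMap, eval_lift,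
      Matrix.cons_val, map_one, map_mul, map_neg, eval_C]
    linear_combination hx
  have two_mul_I_ne_zero : 2 * I ≠ 0 := mul_ne_zero two_ne_zero I_ne_zero
  have hG : C (2 * I)⁻¹ * G = 0 := congrFun A_eq_zero 0
  refine ⟨(mul_eq_zero.1 hG).resolve_left (C_ne_zero.2 (inv_ne_zero two_mul_I_ne_zero)), ?_⟩
  exact ⟨neg_eq_zero.1 (congrFun A_eq_zero 2), neg_eq_zero.1 (congrFun A_eq_zero 1),
    neg_eq_zero.1 (congrFun A_eq_zero 3)⟩

theorem holoNondeg_iff_det_jacobianMatrix_ne_zero :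
    HoloNondeg P Q R ↔ (jacobianMatrix ![P, Q, R]).det ≠ 0 := by
  constructor
  · intro hM hdet
    obtain ⟨F, F_ne_zero, hF⟩ := exists_derivAlong_eq_zero_iff.2 hdet
    have tangent := holoTangent_of_derivAlong_eq_zero (hF 0) (hF 1) (hF 2)
    exact F_ne_zero (_root_.funext (hM F 0 tangent).1)
  · intro hdet F G h
    obtain ⟨hG, hP, hQ, hR⟩ := h.eq_zero_of_linearIndependent
      (linearIndependent_cons_one_of_det_jacobianMatrix_ne_zero hdet)
    have hF : F = 0 := by
      by_contra F_ne_zero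
      refine hdet (exists_derivAlong_eq_zero_iff.1 ⟨F, F_ne_zero, ?_⟩)
      simp [Fin.forall_fin_succ, hP, hQ, hR]
    exact ⟨congrFun hF, hG⟩

end Tangency

section Monomials

variable {R σ : Type*} [CommRing R] [Fintype σ] [DecidableEq σ]

lemma prod_X_mul_det_jacobianMatrix_monomial (c : σ → R) (e : σ → σ →₀ ℕ) :
    (∏ j, X j) * (jacobianMatrix fun i => monomial (e i) (c i)).det =
      (∏ i, monomial (e i) (c i)) * (Matrix.of fun j i => (e i j : MvPolynomial σ R)).det := by
  rw [← Matrix.det_mul_column, ← Matrix.det_mul_row]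
  congr 1
  ext1 j i
  simp only [jacobianMatrix, Matrix.of_apply, X_mul_pderiv_monomial, nsmul_eq_mul, mul_comm]

lemma det_jacobianMatrix_monomial_eq_zero_iff [IsDomain R] [CharZero R] {c : σ → R}
    (hc : ∀ i, c i ≠ 0) (e : σ → σ →₀ ℕ) :
    (jacobianMatrix fun i => monomial (e i) (c i)).det = 0 ↔
      (Matrix.of fun j i => (e i j : ℤ)).det = 0 := by
  have prod_X_ne_zero : (∏ j, X j : MvPolynomial σ R) ≠ 0 :=
    Finset.prod_ne_zero_iff.2 fun j _ => X_ne_zero j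
  have prod_monomial_ne_zero : ∏ i, monomial (e i) (c i) ≠ 0 :=
    Finset.prod_ne_zero_iff.2 fun i _ => monomial_eq_zero.not.2 (hc i)
  have det_cast : (Matrix.of fun j i => (e i j : MvPolynomial σ R)).det =
      ((Matrix.of fun j i => (e i j : ℤ)).det : MvPolynomial σ R) := by
    rw [Int.cast_det]
    congr 1
    ext1 j i
    simp
  rw [← mul_eq_zero_iff_left prod_X_ne_zero, prod_X_mul_det_jacobianMatrix_monomial,
    mul_eq_zero_iff_left prod_monomial_ne_zero, det_cast, Int.cast_eq_zero]

lemma mon_eq_monomial (c : ℂ) (e : Fin 3 → ℕ) :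
    mon c e = monomial (Finsupp.equivFunOnFinite.symm e) c := by
  rw [monomial_eq, Finsupp.prod_fintype _ _ (by simp), Fin.prod_univ_three]
  simp [mon, mul_assoc]

lemma det_jacobianMatrix_mon_eq_zero_iff {cP cQ cR : ℂ} (hcP : cP ≠ 0) (hcQ : cQ ≠ 0)
    (hcR : cR ≠ 0) (a b g : Fin 3 → ℕ) :
    (jacobianMatrix ![mon cP a, mon cQ b, mon cR g]).det = 0 ↔ edet a b g = 0 := by
  let c : Fin 3 → ℂ := ![cP, cQ, cR]
  let e : Fin 3 → Fin 3 →₀ ℕ := fun i => Finsupp.equivFunOnFinite.symm (![a, b, g] i)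
  have hc : ∀ i, c i ≠ 0 := by simp [c, Fin.forall_fin_succ, hcP, hcQ, hcR]
  have family_eq : ![mon cP a, mon cQ b, mon cR g] = fun i => monomial (e i) (c i) := by
    funext i
    fin_cases i <;> exact mon_eq_monomial _ _
  have edet_eq : edet a b g = (Matrix.of fun j i => (e i j : ℤ)).det := by
    rw [edet]
    congr 1
    ext j i
    fin_cases j <;> fin_cases i <;> rfl
  rw [family_eq, edet_eq, det_jacobianMatrix_monomial_eq_zero_iff hc]

end Monomials

theorem stmt7_general {cP cQ cR : ℂ} (hcP : cP ≠ 0) (hcQ : cQ ≠ 0) (hcR : cR ≠ 0)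
    (a b g : Fin 3 → ℕ) : HoloNondeg (mon cP a) (mon cQ b) (mon cR g) ↔ edet a b g ≠ 0 :=
  holoNondeg_iff_det_jacobianMatrix_ne_zero.trans
    (det_jacobianMatrix_mon_eq_zero_iff hcP hcQ hcR a b g).not

/-- For monomials `P = c_P z^α`, `Q = c_Q z^β`, `R = c_R z^γ` with
nonzero coefficients and `deg P + deg Q = 2·deg R`, the model `M` is holomorphically
nondegenerate iff the determinant of the exponent matrix is nonzero. -/
theorem stmt7 (cP cQ cR : ℂ) (hcP : cP ≠ 0) (hcQ : cQ ≠ 0) (hcR : cR ≠ 0)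
    (a b g : Fin 3 → ℕ)
    (hdeg : degE a + degE b = 2 * degE g) :
    HoloNondeg (mon cP a) (mon cQ b) (mon cR g) ↔ edet a b g ≠ 0 :=
  stmt7_general hcP hcQ hcR a b g
end
end
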